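/- Let E ⊆ 𝕋 be a closed set of Lebesgue measure zero and let ω : (0,π] → (0,∞) be continuous and increasing, with t ↦ ω(t^γ) concave for some γ > 2 and t ↦ tω'(t)/ω(t) increasing, with log ω(dist(·,E)) ∈ L¹(𝕋). Then: (1) if E is an 𝓛₁-set and α ∈ (0,1/2) and ∫_𝕋 dist(ζ,E)^{2α−1} log(1/dist(ζ,E)) |dζ| < ∞, then f_{α,E} is a multiplier of 𝒟; (2) if E is an 𝓛₂-set and ∫_𝕋 dist(ζ,E) ω'(dist(ζ,E))² log(1/dist(ζ,E)) |dζ| < ∞, then f_{ω,E} is a multiplier of 𝒟. -/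

import Mathlib

open MeasureTheory Real Set

noncomputable section

/-- The unit circle in `ℂ`. -/
def circleT : Set ℂ := Metric.sphere (0 : ℂ) 1

/-- Arc-length parametrization of the unit circle. -/
def cpt (θ : ℝ) : ℂ := Complex.exp (θ * Complex.I)

/-- Distance from a point to a set. -/
def dE (E : Set ℂ) (ζ : ℂ) : ℝ := Metric.infDist ζ E

/-- Arc-length integral over the whole circle. -/
def circInt (f : ℂ → ℝ) : ℝ := ∫ θ in Set.Ioc 0 (2 * π), f (cpt θ)

/-- Arc-length integral over a subset `Λ` of the circle. -/
def circIntOn (Λ : Set ℂ) (f : ℂ → ℝ) : ℝ :=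
  ∫ θ in {θ ∈ Set.Ioc 0 (2 * π) | cpt θ ∈ Λ}, f (cpt θ)

/-- `E` has arc-length (Lebesgue) measure zero. -/
def MeasureZeroOnCircle (E : Set ℂ) : Prop :=
  volume {θ ∈ Set.Ioc 0 (2 * π) | cpt θ ∈ E} = 0

/-- `E` is a Carleson set: `∫_𝕋 log dist(ζ,E) |dζ| > -∞`. -/
def CarlesonSet (E : Set ℂ) : Prop :=
  IntegrableOn (fun θ => Real.log (dE E (cpt θ))) (Set.Ioc 0 (2 * π)) volume

/-- `I(ζ,E)`: the connected component of `𝕋 \ E` containing `ζ`. -/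
def compArc (E : Set ℂ) (ζ : ℂ) : Set ℂ := connectedComponentIn (circleT \ E) ζ

/-- `Γ(ζ,E)`. -/
def GammaSet (E : Set ℂ) (ζ : ℂ) : Set ℂ :=
  {ζ' ∈ circleT \ compArc E ζ | dE E ζ' ≤ dE E ζ}

/-- `Σ(ζ,E)`. -/
def SigmaSet (E : Set ℂ) (ζ : ℂ) : Set ℂ :=
  {ζ' ∈ circleT \ compArc E ζ | dE E ζ ≤ dE E ζ'}

/-- The Richter–Sundberg integrand for the outer function with boundary modulus
`ω(dist(·,E))`. -/
def RSker (ω : ℝ → ℝ) (E : Set ℂ) (ζ ζ' : ℂ) : ℝ :=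
  ((ω (dE E ζ')) ^ 2 - (ω (dE E ζ)) ^ 2
    - 2 * (ω (dE E ζ)) ^ 2 * Real.log (ω (dE E ζ') / ω (dE E ζ))) / ‖ζ - ζ'‖ ^ 2

/-- Local Dirichlet integral `D_ζ(f_{ω,E})` (Richter–Sundberg formula). -/
def locDir (ω : ℝ → ℝ) (E : Set ℂ) (ζ : ℂ) : ℝ :=
  (1 / (2 * π)) * circInt (fun ζ' => RSker ω E ζ ζ')

/-- Local Dirichlet integral restricted to `Λ`. -/
def locDirOn (ω : ℝ → ℝ) (E : Set ℂ) (Λ : Set ℂ) (ζ : ℂ) : ℝ :=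
  (1 / (2 * π)) * circIntOn Λ (fun ζ' => RSker ω E ζ ζ')

/-- `E` is an `𝓛₁`-set. -/
def L1Set (E : Set ℂ) : Prop :=
  ∃ C > 0, ∀ ζ ∈ circleT \ E,
    circIntOn (GammaSet E ζ)
      (fun ζ' => Real.log (dE E ζ / dE E ζ') / ‖ζ - ζ'‖ ^ 2) ≤ C / dE E ζ

/-- The `𝓛₂` inequality with constant `C`. -/
def L2With (E : Set ℂ) (C : ℝ) : Prop :=
  ∀ ζ ∈ circleT \ E,
    circIntOn (GammaSet E ζ)
      (fun ζ' => (Real.log (dE E ζ / dE E ζ')) ^ 2 / ‖ζ - ζ'‖ ^ 2) ≤ C / dE E ζ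

/-- `E` is an `𝓛₂`-set. -/
def L2Set (E : Set ℂ) : Prop := ∃ C > 0, L2With E C

/-- Supremum of `dist(·,E)` over the arc `cpt '' (a,b]`. -/
def arcSup (E : Set ℂ) (a b : ℝ) : ℝ := sSup ((fun θ => dE E (cpt θ)) '' Set.Ioc a b)

/-- `E` is a `𝒦`-set (Kotochigov). -/
def KSet (E : Set ℂ) : Prop :=
  ∃ c > 0, ∀ a b : ℝ, a < b → b ≤ a + 2 * π → c * (b - a) ≤ arcSup E a b

/-- Integral of a weight over the arc `cpt '' (a,b]` (with respect to arc length). -/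
def arcInt (w : ℂ → ℝ) (a b : ℝ) : ℝ := ∫ θ in Set.Ioc a b, w (cpt θ)

/-- Double logarithmic integral of a weight over an arc. -/
def arcDouble (w : ℂ → ℝ) (a b : ℝ) : ℝ :=
  ∫ θ in Set.Ioc a b, (∫ θ' in Set.Ioc a b,
    Real.log (1 / ‖cpt θ - cpt θ'‖) * w (cpt θ) * w (cpt θ'))

/-- Arc-length measure of `{ζ ∈ I : dist(ζ,E) ≤ t}` for the arc `cpt '' (a,b]`. -/
def sublevelMeas (E : Set ℂ) (a b t : ℝ) : ℝ :=
  (volume {θ ∈ Set.Ioc a b | dE E (cpt θ) ≤ t}).toReal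

/-- Arc-length measure of `E_t = {ζ ∈ 𝕋 : dist(ζ,E) ≤ t}`. -/
def EtMeas (E : Set ℂ) (t : ℝ) : ℝ := sublevelMeas E 0 (2 * π) t

/-- The open unit disc. -/
def unitDisc : Set ℂ := Metric.ball (0 : ℂ) 1

/-- Membership in the (holomorphic) Dirichlet space `𝒟`. -/
def MemDirichlet (f : ℂ → ℂ) : Prop :=
  DifferentiableOn ℂ f unitDisc ∧
  (∃ M : ℝ, ∀ r ∈ Set.Ioo (0 : ℝ) 1,
    (∫ θ in Set.Ioc 0 (2 * π), ‖f ((r : ℂ) * cpt θ)‖ ^ 2) ≤ M) ∧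
  IntegrableOn (fun z => ‖deriv f z‖ ^ 2) unitDisc volume

/-- `f` is a multiplier of the Dirichlet space `𝒟`. -/
def IsMultiplierD (f : ℂ → ℂ) : Prop :=
  ∀ g : ℂ → ℂ, MemDirichlet g → MemDirichlet (fun z => f z * g z)

/-- The outer function `f_{ω,E}` with boundary modulus `ω(dist(·,E))`. -/
def outerFun (ω : ℝ → ℝ) (E : Set ℂ) (z : ℂ) : ℂ :=
  Complex.exp ((((2 * π)⁻¹ : ℝ) : ℂ) * ∫ θ in Set.Ioc 0 (2 * π),
    ((cpt θ + z) / (cpt θ - z)) * ((Real.log (ω (dE E (cpt θ))) : ℝ) : ℂ))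

/-- `log ω(dist(·,E)) ∈ L¹(𝕋)`. -/
def LogOmegaInt (ω : ℝ → ℝ) (E : Set ℂ) : Prop :=
  IntegrableOn (fun θ => Real.log (ω (dE E (cpt θ)))) (Set.Ioc 0 (2 * π)) volume

/-- Standing hypotheses on `ω` (with derivative `ω'`): continuous, positive, increasing on
`(0,π]`, differentiable with derivative `ω'`, `t ↦ ω(t^γ)` concave, and `t ↦ tω'(t)/ω(t)`
increasing. -/
def OmegaHyp (ω ω' : ℝ → ℝ) (γ : ℝ) : Prop :=
  ContinuousOn ω (Set.Ioc 0 π) ∧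
  (∀ t ∈ Set.Ioc (0 : ℝ) π, 0 < ω t) ∧
  MonotoneOn ω (Set.Ioc 0 π) ∧
  (∀ t ∈ Set.Ioo (0 : ℝ) π, HasDerivAt ω (ω' t) t) ∧
  ConcaveOn ℝ (Set.Ioc 0 (π ^ γ⁻¹)) (fun t => ω (t ^ γ)) ∧
  MonotoneOn (fun t => t * ω' t / ω t) (Set.Ioo 0 π)

/-- The generalized Cantor set `E_{(ζ_n)}` (with `ξ k` playing the role of `ζ_{k+1}`). -/
def gCantorSet (ξ : ℕ → ℝ) : Set ℂ :=
  {z | ∃ ε : ℕ → Bool, z = Complex.exp (((2 * π : ℝ) : ℂ) * Complex.I *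
    ((∑' n : ℕ, (if ε n then (1 : ℝ) else 0) * (∏ k ∈ Finset.range n, ξ k) * (1 - ξ n) : ℝ) : ℂ))}

end

/-!
Write `d` for the distance to `E` and `f` for the outer function with boundary modulus `ω ∘ d`. Put
`β = 1 / γ < 1 / 2`, so that `ω` is a concave function of `t ^ β`.

At the point `(1 - s) ζ` the Poisson kernel gives `|f| ≲ ω (d ζ + s)`, and Cauchy–Schwarz bounds
`|f'|²` by an average over the circle of the squared increments of `log ω ∘ d`, multiplied by
`ω (d ζ + s)²`. Up to a constant, concavity bounds such an increment over a distance `τ` by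
`τ² ω'(d)² (d / (d + τ)) ^ p`, summed over the two endpoints, for any `p < 2 - 2 β`. Since
`β < 1 / 2` the exponent may be chosen with `p > 1`, and then this gain makes the integral in `τ`
converge. Symmetry of the kernel and Tonelli's theorem reduce the energy of `f` with weight
`1 + log (1 / s)` to `∫ d ω'(d)² log (1 / d)`.

A function `g` of the Dirichlet space satisfies `|g|² ≲ 1 + log (1 / s)`, so a bounded `f` whose
log-weighted energy is finite satisfies `∫ |f' g|² < ∞` and is a multiplier.
-/

/-- Increasing weights on `(0, R)` that are concave functions of `t ^ β`; the closer `β` is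
to `0`, the stronger the condition. -/
structure PowerConcaveWeight (ω : ℝ → ℝ) (β R : ℝ) : Prop where
  pos : ∀ t ∈ Ioo 0 R, 0 < ω t
  mono : MonotoneOn ω (Ioo 0 R)
  differentiableAt : ∀ t ∈ Ioo 0 R, DifferentiableAt ℝ ω t
  concave : ConcaveOn ℝ (Ioo 0 (R ^ β)) (fun t => ω (t ^ β⁻¹))

theorem hasDerivAt_comp_rpow_inv {ω : ℝ → ℝ} {a β x : ℝ} (hβ : 0 < β) (hx : 0 < x)
    (h : HasDerivAt ω a x) :
    HasDerivAt (fun t => ω (t ^ β⁻¹)) (β⁻¹ * (a * x ^ (1 - β))) (x ^ β) := by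
  have inv_pow : (x ^ β) ^ β⁻¹ = x := rpow_rpow_inv hx.le hβ.ne'
  have hasDerivAt_pow := Real.hasDerivAt_rpow_const (x := x ^ β) (p := β⁻¹)
    (Or.inl (rpow_pos_of_pos hx _).ne')
  have exponent : (x ^ β) ^ (β⁻¹ - 1) = x ^ (1 - β) := by
    rw [← rpow_mul hx.le, mul_sub, mul_inv_cancel₀ hβ.ne', mul_one]
  rw [exponent] at hasDerivAt_pow
  exact (HasDerivAt.comp (x ^ β) (h₂ := ω) (by rwa [inv_pow]) hasDerivAt_pow).congr_deriv (by ring)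

theorem OmegaHyp.powerConcaveWeight {ω ω' : ℝ → ℝ} {γ : ℝ} (hω : OmegaHyp ω ω' γ) :
    PowerConcaveWeight ω γ⁻¹ π where
  pos t ht := hω.2.1 t (Ioo_subset_Ioc_self ht)
  mono := hω.2.2.1.mono Ioo_subset_Ioc_self
  differentiableAt t ht := (hω.2.2.2.1 t ht).differentiableAt
  concave := by
    simpa only [inv_inv] using hω.2.2.2.2.1.subset Ioo_subset_Ioc_self (convex_Ioo _ _)

theorem powerConcaveWeight_rpow {α : ℝ} (hα : 0 < α) (R : ℝ) :
    PowerConcaveWeight (fun t => t ^ α) α R where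
  pos _ ht := rpow_pos_of_pos ht.1 α
  mono _ ht _ _ hts := rpow_le_rpow ht.1.le hts hα.le
  differentiableAt _ ht := Real.differentiableAt_rpow_const_of_ne α ht.1.ne'
  concave := (concaveOn_id (convex_Ioo _ _)).congr fun _ ht =>
    (rpow_inv_rpow (le_of_lt ht.1) hα.ne').symm

theorem mul_log_sub_log_le_sub_mul {a b : ℝ} (ha : 0 < a) (hb : 0 < b) :
    b * (log b - log a) ≤ (b - a) * (1 + (log b - log a)) := by
  have log_le := Real.log_le_sub_one_of_pos (div_pos hb ha)
  rw [Real.log_div hb.ne' ha.ne', le_sub_iff_add_le, le_div_iff₀ ha] at log_le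
  linarith

/-- Squared increments of `log ω` over a distance `τ` are controlled by this kernel; the gain
`(d / (d + τ)) ^ p` with `p > 1` makes its integral in `τ` of order `d * ω' d ^ 2`. -/
noncomputable def incrKernel (ω : ℝ → ℝ) (p d τ : ℝ) : ℝ :=
  deriv ω d ^ 2 * (d / (d + τ)) ^ p

theorem incrKernel_nonneg (ω : ℝ → ℝ) (p : ℝ) {d τ : ℝ} (hd : 0 ≤ d) (hτ : 0 ≤ τ) :
    0 ≤ incrKernel ω p d τ := by
  unfold incrKernel; positivity

namespace PowerConcaveWeight

variable {ω : ℝ → ℝ} {β R : ℝ}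

theorem deriv_nonneg (h : PowerConcaveWeight ω β R) {x : ℝ} (hx : x ∈ Ioo 0 R) :
    0 ≤ deriv ω x := by
  rw [← derivWithin_of_mem_nhds (Ioo_mem_nhds hx.1 hx.2)]
  exact h.mono.derivWithin_nonneg

theorem sub_le_deriv_mul (h : PowerConcaveWeight ω β R) (hβ : 0 < β) {x y : ℝ}
    (hx : 0 < x) (hxy : x ≤ y) (hy : y < R) :
    ω y - ω x ≤ β⁻¹ * (deriv ω x * x ^ (1 - β)) * (y ^ β - x ^ β) := by
  rcases hxy.eq_or_lt with rfl | hxy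
  · simp
  have hy0 := hx.trans hxy
  have pow_lt : x ^ β < y ^ β := rpow_lt_rpow hx.le hxy hβ
  have slope_le := h.concave.slope_le_of_hasDerivAt
    ⟨rpow_pos_of_pos hx β, rpow_lt_rpow hx.le (hxy.trans hy) hβ⟩
    ⟨rpow_pos_of_pos hy0 β, rpow_lt_rpow hy0.le hy hβ⟩ pow_lt
    (hasDerivAt_comp_rpow_inv hβ hx (h.differentiableAt x ⟨hx, hxy.trans hy⟩).hasDerivAt)
  rwa [slope_def_field, div_le_iff₀ (sub_pos.2 pow_lt), rpow_rpow_inv hx.le hβ.ne',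
    rpow_rpow_inv hy0.le hβ.ne'] at slope_le

theorem deriv_mul_le_sub (h : PowerConcaveWeight ω β R) (hβ : 0 < β) {x y : ℝ}
    (hx : 0 < x) (hxy : x < y) (hy : y < R) :
    β⁻¹ * (deriv ω y * y ^ (1 - β)) * (y ^ β - x ^ β) ≤ ω y - ω x := by
  have hy0 := hx.trans hxy
  have pow_lt : x ^ β < y ^ β := rpow_lt_rpow hx.le hxy hβ
  have le_slope := h.concave.le_slope_of_hasDerivAt
    ⟨rpow_pos_of_pos hx β, rpow_lt_rpow hx.le (hxy.trans hy) hβ⟩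
    ⟨rpow_pos_of_pos hy0 β, rpow_lt_rpow hy0.le hy hβ⟩ pow_lt
    (hasDerivAt_comp_rpow_inv hβ hy0 (h.differentiableAt y ⟨hy0, hy⟩).hasDerivAt)
  rwa [slope_def_field, le_div_iff₀ (sub_pos.2 pow_lt), rpow_rpow_inv hx.le hβ.ne',
    rpow_rpow_inv hy0.le hβ.ne'] at le_slope

theorem mul_deriv_le (h : PowerConcaveWeight ω β R) (hβ : 0 < β) {x : ℝ} (hx : x ∈ Ioo 0 R) :
    x * deriv ω x ≤ β * ω x := by
  have tendsto_secant : Filter.Tendsto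
      (fun t : ℝ => β⁻¹ * (deriv ω x * x ^ (1 - β)) * (x ^ β - t ^ β))
      (nhdsWithin 0 (Ioi 0)) (nhds (β⁻¹ * (deriv ω x * x ^ (1 - β)) * (x ^ β - 0))) := by
    refine (Filter.Tendsto.const_sub _ ?_).const_mul _
    have tendsto_pow := (Real.continuousAt_rpow_const 0 β (Or.inr hβ.le)).tendsto
    rw [zero_rpow hβ.ne'] at tendsto_pow
    exact tendsto_pow.mono_left nhdsWithin_le_nhds
  have secant_le : ∀ᶠ t in nhdsWithin (0 : ℝ) (Ioi 0),
      β⁻¹ * (deriv ω x * x ^ (1 - β)) * (x ^ β - t ^ β) ≤ ω x := by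
    filter_upwards [Ioo_mem_nhdsGT hx.1] with t ht
    linarith [h.deriv_mul_le_sub hβ ht.1 ht.2 hx.2, h.pos t ⟨ht.1, ht.2.trans hx.2⟩]
  have limit_le := le_of_tendsto tendsto_secant secant_le
  have pow_mul_pow : x ^ (1 - β) * x ^ β = x := by rw [← rpow_add hx.1, sub_add_cancel, rpow_one]
  rwa [sub_zero, mul_assoc, mul_assoc, pow_mul_pow, inv_mul_le_iff₀ hβ, mul_comm (deriv ω x)]
    at limit_le

theorem le_mul_div_rpow (h : PowerConcaveWeight ω β R) (hβ : 0 < β) {x y : ℝ}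
    (hx : 0 < x) (hxy : x ≤ y) (hy : y < R) : ω y ≤ ω x * (y / x) ^ β := by
  have pow_pos : 0 < x ^ β := rpow_pos_of_pos hx β
  have pow_le : x ^ β ≤ y ^ β := rpow_le_rpow hx.le hxy hβ.le
  have slope_le : β⁻¹ * (deriv ω x * x ^ (1 - β)) ≤ ω x / x ^ β := by
    rw [rpow_sub hx, rpow_one, inv_mul_le_iff₀ hβ, ← mul_div_assoc, ← mul_div_assoc, mul_comm _ x]
    exact div_le_div_of_nonneg_right (h.mul_deriv_le hβ ⟨hx, hxy.trans_lt hy⟩) pow_pos.le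
  calc ω y ≤ ω x + β⁻¹ * (deriv ω x * x ^ (1 - β)) * (y ^ β - x ^ β) := by
        linarith [h.sub_le_deriv_mul hβ hx hxy hy]
    _ ≤ ω x + ω x / x ^ β * (y ^ β - x ^ β) := by gcongr
    _ = ω x * (y / x) ^ β := by rw [div_rpow (hx.le.trans hxy) hx.le]; field_simp; ring

theorem log_sub_log_le (h : PowerConcaveWeight ω β R) (hβ : 0 < β) {x y : ℝ}
    (hx : 0 < x) (hxy : x ≤ y) (hy : y < R) :
    log (ω y) - log (ω x) ≤ β * log (y / x) := by
  have hyx : 0 < y / x := div_pos (hx.trans_le hxy) hx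
  have log_le := Real.log_le_log (h.pos y ⟨hx.trans_le hxy, hy⟩) (h.le_mul_div_rpow hβ hx hxy hy)
  rw [Real.log_mul (h.pos x ⟨hx, hxy.trans_lt hy⟩).ne' (rpow_pos_of_pos hyx β).ne',
    Real.log_rpow hyx] at log_le
  linarith

theorem sub_le_of_le_add (h : PowerConcaveWeight ω β R) (hβ : β ∈ Ioo 0 1) {x y τ : ℝ}
    (hx : 0 < x) (hxy : x ≤ y) (hyτ : y ≤ x + τ) (hy : y < R) :
    ω y - ω x ≤ β⁻¹ * deriv ω x * τ * (x / (x + τ)) ^ (1 - β) := by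
  set X := x + τ with hX
  have hxX : x ≤ X := hxy.trans hyτ
  have hX0 : 0 < X := hx.trans_le hxX
  have := h.deriv_nonneg ⟨hx, hxy.trans_lt hy⟩
  have := hβ.1
  have pow_sub_pow_le : X ^ β - x ^ β ≤ X ^ (β - 1) * τ := by
    have : X ^ (β - 1) * x ≤ x ^ (β - 1) * x :=
      mul_le_mul_of_nonneg_right
        (rpow_le_rpow_of_nonpos hx hxX (by linarith [hβ.2])) hx.le
    rw [← rpow_add_one hx.ne', sub_add_cancel] at this
    have pow_eq : X ^ β = X ^ (β - 1) * X := by rw [← rpow_add_one hX0.ne', sub_add_cancel]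
    rw [pow_eq, show τ = X - x by rw [hX]; ring, mul_sub]
    linarith
  calc ω y - ω x ≤ β⁻¹ * (deriv ω x * x ^ (1 - β)) * (y ^ β - x ^ β) :=
        h.sub_le_deriv_mul hβ.1 hx hxy hy
    _ ≤ β⁻¹ * (deriv ω x * x ^ (1 - β)) * (X ^ (β - 1) * τ) := by
        have := rpow_le_rpow (hx.trans_le hxy).le hyτ hβ.1.le
        gcongr
        linarith
    _ = β⁻¹ * deriv ω x * τ * (x / X) ^ (1 - β) := by
        rw [div_rpow hx.le hX0.le, div_eq_mul_inv, ← rpow_neg hX0.le, neg_sub]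
        ring

theorem mul_log_sub_log_le (h : PowerConcaveWeight ω β R) (hβ : β ∈ Ioo 0 1) {x y τ ε : ℝ}
    (hε : 0 < ε) (hx : 0 < x) (hxy : x ≤ y) (hyτ : y ≤ x + τ) (hy : y < R) :
    ω y * (log (ω y) - log (ω x)) ≤
      (β⁻¹ + ε⁻¹) * deriv ω x * τ * (x / (x + τ)) ^ (1 - β - ε) := by
  have hx_mem : x ∈ Ioo 0 R := ⟨hx, hxy.trans_lt hy⟩
  have hX : 0 < x + τ := (hx.trans_le hxy).trans_le hyτ
  have hβ0 := hβ.1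
  have one_le_ratio : 1 ≤ (x + τ) / x := (one_le_div hx).2 (hxy.trans hyτ)
  have log_le : log (ω y) - log (ω x) ≤ β * (((x + τ) / x) ^ ε / ε) :=
    (h.log_sub_log_le hβ0 hx hxy hy).trans <| mul_le_mul_of_nonneg_left
      ((Real.log_le_log (div_pos (hx.trans_le hxy) hx) (by gcongr)).trans
        (Real.log_le_rpow_div (one_pos.le.trans one_le_ratio) hε)) hβ0.le
  have one_le_pow : 1 ≤ ((x + τ) / x) ^ ε := Real.one_le_rpow one_le_ratio hε.le
  calc ω y * (log (ω y) - log (ω x))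
      ≤ (ω y - ω x) * (1 + (log (ω y) - log (ω x))) :=
        mul_log_sub_log_le_sub_mul (h.pos x hx_mem) (h.pos y ⟨hx.trans_le hxy, hy⟩)
    _ ≤ (ω y - ω x) * ((1 + β / ε) * ((x + τ) / x) ^ ε) := by
        refine mul_le_mul_of_nonneg_left ?_
          (sub_nonneg.2 (h.mono hx_mem ⟨hx.trans_le hxy, hy⟩ hxy))
        calc 1 + (log (ω y) - log (ω x))
            ≤ ((x + τ) / x) ^ ε + β * (((x + τ) / x) ^ ε / ε) := add_le_add one_le_pow log_le
          _ = (1 + β / ε) * ((x + τ) / x) ^ ε := by ring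
    _ ≤ β⁻¹ * deriv ω x * τ * (x / (x + τ)) ^ (1 - β) *
          ((1 + β / ε) * ((x + τ) / x) ^ ε) := by
        gcongr
        exact h.sub_le_of_le_add hβ hx hxy hyτ hy
    _ = (β⁻¹ + ε⁻¹) * deriv ω x * τ * (x / (x + τ)) ^ (1 - β - ε) := by
        rw [rpow_sub (div_pos hx hX) (1 - β), div_eq_mul_inv _ (_ ^ ε), ← inv_rpow (by positivity),
          inv_div]
        field_simp

theorem sq_mul_log_sub_log_le (h : PowerConcaveWeight ω β R) (hβ : β ∈ Ioo 0 1) {x y τ p : ℝ}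
    (hp : p < 2 - 2 * β) (hx : 0 < x) (hxy : x ≤ y) (hyτ : y ≤ x + τ) (hy : y < R) :
    (ω y * (log (ω y) - log (ω x))) ^ 2 ≤
      (β⁻¹ + (1 - β - p / 2)⁻¹) ^ 2 * τ ^ 2 * incrKernel ω p x τ := by
  have hε : 0 < 1 - β - p / 2 := by linarith
  have hX : 0 < x + τ := (hx.trans_le hxy).trans_le hyτ
  have hy_mem : y ∈ Ioo 0 R := ⟨hx.trans_le hxy, hy⟩
  have hx_mem : x ∈ Ioo 0 R := ⟨hx, hxy.trans_lt hy⟩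
  have increment_nonneg : 0 ≤ ω y * (log (ω y) - log (ω x)) :=
    mul_nonneg (h.pos y hy_mem).le (sub_nonneg.2
      (Real.log_le_log (h.pos x hx_mem) (h.mono hx_mem hy_mem hxy)))
  have half_pow_sq : ((x / (x + τ)) ^ (p / 2)) ^ 2 = (x / (x + τ)) ^ p := by
    rw [← rpow_mul_natCast (div_pos hx hX).le, Nat.cast_ofNat, div_mul_cancel₀ p two_ne_zero]
  calc (ω y * (log (ω y) - log (ω x))) ^ 2
      ≤ ((β⁻¹ + (1 - β - p / 2)⁻¹) * deriv ω x * τ *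
          (x / (x + τ)) ^ (1 - β - (1 - β - p / 2))) ^ 2 :=
        pow_le_pow_left₀ increment_nonneg (h.mul_log_sub_log_le hβ hε hx hxy hyτ hy) 2
    _ = (β⁻¹ + (1 - β - p / 2)⁻¹) ^ 2 * τ ^ 2 * incrKernel ω p x τ := by
        rw [sub_sub_cancel, incrKernel, mul_pow, half_pow_sq]
        ring

theorem sq_mul_log_sub_log_add_le (h : PowerConcaveWeight ω β R) (hβ : β ∈ Ioo 0 1)
    {d d' s t p : ℝ} (hp : p < 2 - 2 * β) (hd : 0 < d) (hd' : d' ∈ Ioo 0 R) (hs : 0 ≤ s)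
    (hds : d + s < R) (hdd' : |d - d'| ≤ t) :
    (ω (d + s) * (log (ω d') - log (ω (d + s)))) ^ 2 ≤
      (β⁻¹ + (1 - β - p / 2)⁻¹) ^ 2 * (s + t) ^ 2 *
        (incrKernel ω p d (s + t) + incrKernel ω p d' (s + t)) := by
  have ⟨sub_le, le_sub⟩ := abs_le.1 hdd'
  have hst : 0 ≤ s + t := add_nonneg hs ((abs_nonneg _).trans hdd')
  have hd_mem : d ∈ Ioo 0 R := ⟨hd, by linarith⟩
  have hds_mem : d + s ∈ Ioo 0 R := ⟨by linarith, hds⟩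
  have kernel_nonneg := incrKernel_nonneg ω p hd.le hst
  have kernel_nonneg' := incrKernel_nonneg ω p hd'.1.le hst
  have hω := h.pos _ hds_mem
  rcases le_total (d + s) d' with hle | hle
  · have ω_le := h.mono hds_mem hd' hle
    have log_le := Real.log_le_log hω ω_le
    have log_le' := Real.log_le_log (h.pos d hd_mem) (h.mono hd_mem hds_mem (by linarith))
    calc _ ≤ (ω d' * (log (ω d') - log (ω d))) ^ 2 := by
          refine pow_le_pow_left₀ (mul_nonneg hω.le (sub_nonneg.2 log_le)) ?_ 2
          exact mul_le_mul ω_le (by linarith) (sub_nonneg.2 log_le) (hω.le.trans ω_le)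
      _ ≤ _ := h.sq_mul_log_sub_log_le (τ := s + t) hβ hp hd (by linarith) (by linarith) hd'.2
      _ ≤ _ := by gcongr; linarith
  · calc _ = (ω (d + s) * (log (ω (d + s)) - log (ω d'))) ^ 2 := by ring
      _ ≤ _ := h.sq_mul_log_sub_log_le (τ := s + t) hβ hp hd'.1 hle (by linarith) hds
      _ ≤ _ := by gcongr; linarith

end PowerConcaveWeight

theorem sq_lintegral_mul_le {α : Type*} [MeasurableSpace α] {μ : Measure α} {f g : α → ENNReal}
    (hf : AEMeasurable f μ) (hg : AEMeasurable g μ) :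
    (∫⁻ a, f a * g a ∂μ) ^ 2 ≤ (∫⁻ a, f a ^ 2 ∂μ) * ∫⁻ a, g a ^ 2 ∂μ := by
  have sq_sqrt (x : ENNReal) : (x ^ (1 / (2 : ℝ))) ^ 2 = x := by
    rw [← ENNReal.rpow_natCast, ← ENNReal.rpow_mul]; norm_num
  have holder := ENNReal.lintegral_mul_le_Lp_mul_Lq μ Real.HolderConjugate.two_two hf hg
  simpa only [mul_pow, sq_sqrt, ENNReal.rpow_ofNat, Pi.mul_apply] using pow_le_pow_left' holder 2

theorem lintegral_comp_abs (F : ℝ → ENNReal) :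
    ∫⁻ x, F |x| = 2 * ∫⁻ x in Ioi 0, F x := by
  have on_Ioi : ∫⁻ x in Ioi 0, F |x| = ∫⁻ x in Ioi 0, F x :=
    setLIntegral_congr_fun measurableSet_Ioi fun x hx => by rw [abs_of_pos hx]
  have on_Iio : ∫⁻ x in Iio 0, F |x| = ∫⁻ x in Ioi 0, F |x| := by
    rw [← (Measure.measurePreserving_neg (volume : Measure ℝ)).setLIntegral_comp_preimage_emb
      (MeasurableEquiv.neg ℝ).measurableEmbedding]
    simp only [abs_neg, neg_preimage, neg_Iio, neg_zero]
  rw [← lintegral_add_compl (fun x : ℝ => F |x|) measurableSet_Iio, compl_Iio,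
    setLIntegral_congr Ioi_ae_eq_Ici.symm, on_Iio, on_Ioi, two_mul]

theorem lintegral_Ioi_comp_div (F : ℝ → ENNReal) {c : ℝ} (hc : 0 < c) :
    ∫⁻ x in Ioi 0, F (x / c) = ENNReal.ofReal c * ∫⁻ x in Ioi 0, F x := by
  let e : ℝ ≃ᵐ ℝ := (Homeomorph.mulRight₀ c hc.ne').toMeasurableEquiv
  have preimage_Ioi : e ⁻¹' Ioi 0 = Ioi 0 := by
    ext x
    exact mul_pos_iff_of_pos_right hc
  have map_volume : (volume : Measure ℝ) = ENNReal.ofReal c • Measure.map e volume := by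
    rw [← abs_of_pos hc]
    exact (Real.smul_map_volume_mul_right hc.ne').symm
  conv_lhs => rw [map_volume]
  rw [Measure.restrict_smul, lintegral_smul_measure, smul_eq_mul, MeasurableEquiv.restrict_map,
    lintegral_map_equiv, preimage_Ioi]
  congr 2 with x
  exact congrArg F (mul_div_cancel_right₀ x hc.ne')

theorem lintegral_Ioc_rpow_mul_add_rpow_le {b c d : ℝ} (hb : b < 1) (hc : 0 ≤ c) (hd : 0 < d) :
    ∫⁻ x in Ioc 0 d, ENNReal.ofReal (x ^ (-b) * (d + x) ^ (-c)) ≤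
      ENNReal.ofReal ((1 - b)⁻¹ * d ^ (1 - b - c)) := by
  have integrable : IntegrableOn (fun x : ℝ => x ^ (-b) * d ^ (-c)) (Ioc 0 d) := by
    refine Integrable.mul_const ?_ _
    rw [← IntegrableOn, ← intervalIntegrable_iff_integrableOn_Ioc_of_le hd.le]
    exact intervalIntegral.intervalIntegrable_rpow' (by linarith)
  have nonneg : 0 ≤ᵐ[volume.restrict (Ioc 0 d)] fun x : ℝ => x ^ (-b) * d ^ (-c) := by
    filter_upwards [ae_restrict_mem measurableSet_Ioc] with x hx
    have := hx.1
    exact mul_nonneg (by positivity) (by positivity)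
  calc _ ≤ ∫⁻ x in Ioc 0 d, ENNReal.ofReal (x ^ (-b) * d ^ (-c)) := by
        refine setLIntegral_mono' measurableSet_Ioc fun x hx => ENNReal.ofReal_le_ofReal ?_
        have := hx.1
        refine mul_le_mul_of_nonneg_left ?_ (by positivity)
        exact rpow_le_rpow_of_nonpos hd (by linarith) (by linarith)
    _ = ENNReal.ofReal (∫ x in (0)..d, x ^ (-b) * d ^ (-c)) := by
        rw [intervalIntegral.integral_of_le hd.le,
          ofReal_integral_eq_lintegral_ofReal integrable nonneg]
    _ = _ := by
        rw [intervalIntegral.integral_mul_const, integral_rpow (Or.inl (by linarith)),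
          zero_rpow (by linarith), sub_zero, div_mul_eq_mul_div, ← rpow_add hd, div_eq_inv_mul]
        ring_nf

theorem lintegral_Ioi_rpow_mul_add_rpow_le {b c d : ℝ} (hc : 0 ≤ c) (hbc : 1 < b + c)
    (hd : 0 < d) :
    ∫⁻ x in Ioi d, ENNReal.ofReal (x ^ (-b) * (d + x) ^ (-c)) ≤
      ENNReal.ofReal ((b + c - 1)⁻¹ * d ^ (1 - b - c)) := by
  have nonneg : 0 ≤ᵐ[volume.restrict (Ioi d)] fun x : ℝ => x ^ (-b - c) := by
    filter_upwards [ae_restrict_mem measurableSet_Ioi] with x hx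
    exact rpow_nonneg (hd.trans hx).le _
  calc _ ≤ ∫⁻ x in Ioi d, ENNReal.ofReal (x ^ (-b - c)) := by
        refine setLIntegral_mono' measurableSet_Ioi fun x hx => ENNReal.ofReal_le_ofReal ?_
        have hx0 : 0 < x := hd.trans hx
        rw [sub_eq_add_neg, rpow_add hx0]
        refine mul_le_mul_of_nonneg_left ?_ (by positivity)
        exact rpow_le_rpow_of_nonpos hx0 (by linarith) (by linarith)
    _ = ENNReal.ofReal (∫ x in Ioi d, x ^ (-b - c)) :=
        (ofReal_integral_eq_lintegral_ofReal
          (integrableOn_Ioi_rpow_of_lt (by linarith) hd) nonneg).symm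
    _ = _ := by
        rw [integral_Ioi_rpow_of_lt (by linarith) hd, show -b - c + 1 = -(b + c - 1) by ring,
          neg_div_neg_eq, div_eq_inv_mul]
        ring_nf

theorem lintegral_rpow_mul_add_rpow_le {b c d : ℝ} (hb : b < 1) (hbc : 1 < b + c) (hd : 0 < d) :
    ∫⁻ x in Ioi 0, ENNReal.ofReal (x ^ (-b) * (d + x) ^ (-c)) ≤
      ENNReal.ofReal (((1 - b)⁻¹ + (b + c - 1)⁻¹) * d ^ (1 - b - c)) := by
  have := inv_nonneg.2 (sub_pos.2 hb).le
  have := inv_nonneg.2 (sub_pos.2 hbc).le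
  rw [← Ioc_union_Ioi_eq_Ioi hd.le, add_mul, ENNReal.ofReal_add (by positivity) (by positivity)]
  exact (lintegral_union_le _ _ _).trans <| add_le_add
    (lintegral_Ioc_rpow_mul_add_rpow_le hb (by linarith) hd)
    (lintegral_Ioi_rpow_mul_add_rpow_le (by linarith) hbc hd)

theorem circleMap_zero_one : circleMap 0 1 = cpt := by
  ext θ
  simp [circleMap, cpt]

theorem continuous_cpt : Continuous cpt := circleMap_zero_one ▸ continuous_circleMap 0 1

@[fun_prop]
theorem measurable_cpt : Measurable cpt := continuous_cpt.measurable

theorem norm_cpt (θ : ℝ) : ‖cpt θ‖ = 1 := Complex.norm_exp_ofReal_mul_I θ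

theorem norm_ofReal_mul_cpt {r : ℝ} (hr : 0 ≤ r) (θ : ℝ) : ‖(r : ℂ) * cpt θ‖ = r := by
  rw [norm_mul, norm_cpt, mul_one, Complex.norm_of_nonneg hr]

theorem mem_unitDisc {z : ℂ} : z ∈ unitDisc ↔ ‖z‖ < 1 := mem_ball_zero_iff

theorem ofReal_mul_cpt_mem_unitDisc {r : ℝ} (hr : 0 ≤ r) (hr1 : r < 1) (θ : ℝ) :
    (r : ℂ) * cpt θ ∈ unitDisc := by
  rwa [mem_unitDisc, norm_ofReal_mul_cpt hr]

theorem cpt_add (a b : ℝ) : cpt (a + b) = cpt a * cpt b := by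
  rw [cpt, Complex.ofReal_add, add_mul, Complex.exp_add, cpt, cpt]

theorem cpt_periodic : Function.Periodic cpt (2 * π) :=
  circleMap_zero_one ▸ periodic_circleMap 0 1

theorem lintegral_Ioc_cpt (F : ℂ → ENNReal) (a b : ℝ) :
    ∫⁻ θ in Ioc a (a + 2 * π), F (cpt θ) = ∫⁻ θ in Ioc b (b + 2 * π), F (cpt θ) := by
  have : VAddInvariantMeasure (AddSubgroup.zmultiples (2 * π)) ℝ volume :=
    ⟨fun c s _ => measure_preimage_add _ _ _⟩
  exact IsAddFundamentalDomain.setLIntegral_eq (G := AddSubgroup.zmultiples (2 * π))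
    (isAddFundamentalDomain_Ioc two_pi_pos a) (isAddFundamentalDomain_Ioc two_pi_pos b) _
    (cpt_periodic.comp F).map_vadd_zmultiples

theorem lintegral_circle_eq_Ioc_neg_pi_pi (F : ℂ → ENNReal) :
    ∫⁻ θ in Ioc 0 (2 * π), F (cpt θ) = ∫⁻ θ in Ioc (-π) π, F (cpt θ) := by
  have shift := lintegral_Ioc_cpt F 0 (-π)
  rwa [zero_add, show -π + 2 * π = π by ring] at shift

theorem lintegral_circle_rotate (F : ℂ → ENNReal) (θ : ℝ) :
    ∫⁻ θ' in Ioc 0 (2 * π), F (cpt θ * cpt θ') = ∫⁻ θ' in Ioc 0 (2 * π), F (cpt θ') := by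
  have translate := (measurePreserving_add_left volume θ).setLIntegral_comp_preimage_emb
    (measurableEmbedding_addLeft θ) (fun x => F (cpt x)) (Ioc θ (θ + 2 * π))
  simp only [preimage_const_add_Ioc, sub_self, add_sub_cancel_left, cpt_add] at translate
  rw [translate, lintegral_Ioc_cpt F θ 0, zero_add]

theorem abs_div_two_le_norm_one_sub_cpt {x : ℝ} (hx : |x| ≤ π) : |x| / 2 ≤ ‖1 - cpt x‖ := by
  have chord_eq : ‖1 - cpt x‖ = 2 * |Real.sin (x / 2)| := by
    rw [norm_sub_rev, cpt, mul_comm, Complex.norm_exp_I_mul_ofReal_sub_one, norm_mul,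
      Real.norm_ofNat, Real.norm_eq_abs]
  have jordan := Real.mul_abs_le_abs_sin (x := x / 2) (by rw [abs_div, abs_two]; linarith)
  have half_le : 1 / 2 ≤ 2 / π := by
    rw [div_le_div_iff₀ two_pos pi_pos]; linarith [pi_le_four]
  rw [abs_div, abs_two] at jordan
  rw [chord_eq]
  linarith [mul_le_mul_of_nonneg_right half_le (abs_nonneg x)]

theorem lintegral_chord_le {F : ℝ → ENNReal} (hF : AntitoneOn F (Ici 0)) (θ : ℝ) :
    ∫⁻ θ' in Ioc 0 (2 * π), F ‖cpt θ - cpt θ'‖ ≤ 4 * ∫⁻ x in Ioi 0, F x := by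
  calc ∫⁻ θ' in Ioc 0 (2 * π), F ‖cpt θ - cpt θ'‖
      = ∫⁻ x in Ioc (-π) π, F ‖1 - cpt x‖ := by
        rw [← lintegral_circle_eq_Ioc_neg_pi_pi fun z => F ‖1 - z‖,
          ← lintegral_circle_rotate (fun z => F ‖cpt θ - z‖) θ]
        simp only [← mul_one_sub, norm_mul, norm_cpt, one_mul]
    _ ≤ ∫⁻ x in Ioc (-π) π, F (|x| / 2) := by
        refine setLIntegral_mono' measurableSet_Ioc fun x hx => ?_
        exact hF (mem_Ici.2 (by positivity)) (norm_nonneg _)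
          (abs_div_two_le_norm_one_sub_cpt (abs_le.2 ⟨hx.1.le, hx.2⟩))
    _ ≤ ∫⁻ x, F (|x| / 2) := setLIntegral_le_lintegral _ _
    _ = 4 * ∫⁻ x in Ioi 0, F x := by
        rw [lintegral_comp_abs (fun x => F (x / 2)), lintegral_Ioi_comp_div F two_pos,
          ENNReal.ofReal_ofNat, ← mul_assoc]
        norm_num

theorem lintegral_add_chord_rpow_le {p s : ℝ} (hp : 1 < p) (hs : 0 < s) (θ : ℝ) :
    ∫⁻ θ' in Ioc 0 (2 * π), ENNReal.ofReal ((s + ‖cpt θ - cpt θ'‖) ^ (-p)) ≤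
      ENNReal.ofReal (4 * (1 + (p - 1)⁻¹) * s ^ (1 - p)) := by
  have antitone : AntitoneOn (fun t : ℝ => ENNReal.ofReal ((s + t) ^ (-p))) (Ici 0) := by
    intro x hx y _ hxy
    have : 0 ≤ x := hx
    exact ENNReal.ofReal_le_ofReal
      (rpow_le_rpow_of_nonpos (by linarith) (by linarith) (by linarith))
  have integral_le := lintegral_rpow_mul_add_rpow_le (b := 0) (c := p) one_pos (by linarith) hs
  simp only [neg_zero, rpow_zero, one_mul, sub_zero, inv_one, zero_add] at integral_le
  calc _ ≤ 4 * ∫⁻ x in Ioi 0, ENNReal.ofReal ((s + x) ^ (-p)) := lintegral_chord_le antitone θ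
    _ ≤ 4 * ENNReal.ofReal ((1 + (p - 1)⁻¹) * s ^ (1 - p)) := by gcongr
    _ = _ := by rw [mul_assoc, ENNReal.ofReal_mul four_pos.le, ENNReal.ofReal_ofNat]

theorem lintegral_complex_polar {F : ℂ → ENNReal} (hF : Measurable F) :
    ∫⁻ z, F z =
      ∫⁻ r in Ioi (0 : ℝ), ENNReal.ofReal r * ∫⁻ θ in Ioc 0 (2 * π), F ((r : ℂ) * cpt θ) := by
  have polar_eq (p : ℝ × ℝ) : Complex.polarCoord.symm p = (p.1 : ℂ) * cpt p.2 := by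
    rw [Complex.polarCoord_symm_apply, cpt, Complex.exp_mul_I, Complex.ofReal_cos,
      Complex.ofReal_sin]
  have measurable : Measurable fun p : ℝ × ℝ => ENNReal.ofReal p.1 * F ((p.1 : ℂ) * cpt p.2) := by
    fun_prop
  rw [← Complex.lintegral_comp_polarCoord_symm]
  simp only [polar_eq, smul_eq_mul]
  rw [polarCoord_target, Measure.volume_eq_prod, ← Measure.prod_restrict,
    lintegral_prod _ measurable.aemeasurable]
  refine lintegral_congr fun r => ?_
  rw [lintegral_const_mul' _ _ ENNReal.ofReal_ne_top, setLIntegral_congr Ioo_ae_eq_Ioc,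
    lintegral_circle_eq_Ioc_neg_pi_pi fun z => F (r * z)]

theorem lintegral_unitDisc_polar {F : ℂ → ENNReal} (hF : Measurable F) :
    ∫⁻ z in unitDisc, F z =
      ∫⁻ r in Ioo (0 : ℝ) 1, ENNReal.ofReal r * ∫⁻ θ in Ioc 0 (2 * π), F ((r : ℂ) * cpt θ) := by
  have measurableSet_unitDisc : MeasurableSet unitDisc := measurableSet_ball
  rw [← lintegral_indicator measurableSet_unitDisc,
    lintegral_complex_polar (hF.indicator measurableSet_unitDisc), ← Ioi_inter_Iio, inter_comm,
    ← setLIntegral_indicator measurableSet_Iio]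
  refine setLIntegral_congr_fun measurableSet_Ioi fun r hr => ?_
  simp only [indicator, mem_unitDisc, norm_ofReal_mul_cpt (le_of_lt hr), mem_Iio]
  split_ifs
  · rfl
  · rw [lintegral_zero, mul_zero]

theorem rpow_neg_add_le_mul {x y z a b : ℝ} (hx : 0 < x) (hy : 0 < y) (hxz : x ≤ z) (hyz : y ≤ z)
    (ha : 0 ≤ a) (hb : 0 ≤ b) : z ^ (-(a + b)) ≤ x ^ (-a) * y ^ (-b) := by
  rw [neg_add, rpow_add (hx.trans_le hxz)]
  exact mul_le_mul (rpow_le_rpow_of_nonpos hx hxz (neg_nonpos.2 ha))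
    (rpow_le_rpow_of_nonpos hy hyz (neg_nonpos.2 hb)) (rpow_nonneg (hy.le.trans hyz) _)
    (rpow_nonneg hx.le _)

theorem log_le_one_of_le_two {d : ℝ} (hd : 0 < d) (hd2 : d ≤ 2) : log d ≤ 1 := by
  linarith [log_le_sub_one_of_pos hd]

theorem one_sub_log_le {d s X : ℝ} (hd : 0 < d) (hd2 : d ≤ 2) (hs : 0 < s) (hdX : d ≤ X)
    (hsX : s ≤ X) : 1 - log s ≤ 9 * (2 - log d) * (X / s) ^ (1 / 8 : ℝ) := by
  have log_quotient_le : log (d / s) ≤ (d / s) ^ (1 / 8 : ℝ) / (1 / 8) :=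
    log_le_rpow_div (div_pos hd hs).le (by norm_num)
  have quotient_le : (d / s) ^ (1 / 8 : ℝ) ≤ (X / s) ^ (1 / 8 : ℝ) := by gcongr
  have one_le : 1 ≤ (X / s) ^ (1 / 8 : ℝ) := one_le_rpow ((one_le_div hs).2 hsX) (by norm_num)
  rw [log_div hd.ne' hs.ne'] at log_quotient_le
  nlinarith [log_le_one_of_le_two hd hd2]

/-- The kernel `s^{-1/2} (1 - log s) (s + x)^{-1/2} (d + s + x)^{-p}`, in which `s` is the distance
of a point of the disc to the circle and `x` the chord from its radial projection. Integrating it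
out produces the weight `d^{1-p} (2 - log d)`. -/
noncomputable def radialKernel (p d s x : ℝ) : ℝ :=
  s ^ (-(1 / 2) : ℝ) * (1 - log s) * ((s + x) ^ (-(1 / 2) : ℝ) * (d + (s + x)) ^ (-p))

theorem antitoneOn_radialKernel {p d s : ℝ} (hp : 0 ≤ p) (hd : 0 < d) (hs : s ∈ Ioo 0 1) :
    AntitoneOn (radialKernel p d s) (Ici 0) := by
  intro x (hx : 0 ≤ x) y _ hxy
  have log_nonpos : log s ≤ 0 := log_nonpos hs.1.le hs.2.le
  have hsx : 0 < s + x := by linarith [hs.1]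
  have chord_factor_le : (s + y) ^ (-(1 / 2) : ℝ) ≤ (s + x) ^ (-(1 / 2) : ℝ) :=
    rpow_le_rpow_of_nonpos hsx (by linarith) (by norm_num)
  have distance_factor_le : (d + (s + y)) ^ (-p) ≤ (d + (s + x)) ^ (-p) :=
    rpow_le_rpow_of_nonpos (by linarith) (by linarith) (by linarith)
  refine mul_le_mul_of_nonneg_left (mul_le_mul chord_factor_le distance_factor_le ?_ ?_)
    (mul_nonneg (rpow_nonneg hs.1.le _) (by linarith))
  · exact rpow_nonneg (by linarith) _
  · exact rpow_nonneg hsx.le _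

-- The logarithm and the mixed factors are split so that `s` and `x` separate with both resulting
-- integrals convergent.
theorem radialKernel_le {p d s x : ℝ} (hp : 1 < p) (hd : 0 < d) (hd2 : d ≤ 2) (hs : 0 < s)
    (hx : 0 < x) :
    radialKernel p d s x ≤ 9 * (2 - log d) *
      ((s ^ (-(7 / 8) : ℝ) * (d + s) ^ (-(1 / 8 + (p - 1) / 2))) *
        (x ^ (-(1 / 4) : ℝ) * (d + x) ^ (-(3 / 4 + (p - 1) / 2)))) := by
  have hX : 0 < d + (s + x) := by linarith
  have log_nonneg : 0 ≤ 2 - log d := by linarith [log_le_one_of_le_two hd hd2]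
  have log_le := one_sub_log_le hd hd2 hs (X := d + (s + x)) (by linarith) (by linarith)
  rw [div_rpow hX.le hs.le, div_eq_mul_inv, ← rpow_neg hs.le] at log_le
  have split_chord : (s + x) ^ (-(1 / 2) : ℝ) ≤ s ^ (-(1 / 4) : ℝ) * x ^ (-(1 / 4) : ℝ) := by
    convert rpow_neg_add_le_mul hs hx (z := s + x) (a := 1 / 4) (b := 1 / 4) (by linarith)
      (by linarith) (by norm_num) (by norm_num) using 2
    norm_num
  have split_distance : (d + (s + x)) ^ (1 / 8 : ℝ) * (d + (s + x)) ^ (-p) ≤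
      (d + s) ^ (-(1 / 8 + (p - 1) / 2)) * (d + x) ^ (-(3 / 4 + (p - 1) / 2)) := by
    rw [← rpow_add hX]
    convert rpow_neg_add_le_mul (add_pos hd hs) (add_pos hd hx) (z := d + (s + x))
      (a := 1 / 8 + (p - 1) / 2) (b := 3 / 4 + (p - 1) / 2) (by linarith)
      (by linarith) (by linarith) (by linarith) using 2
    ring
  have collect_powers : s ^ (-(7 / 8) : ℝ) =
      s ^ (-(1 / 2) : ℝ) * s ^ (-(1 / 8) : ℝ) * s ^ (-(1 / 4) : ℝ) := by
    rw [← rpow_add hs, ← rpow_add hs]; norm_num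
  calc radialKernel p d s x
      ≤ s ^ (-(1 / 2) : ℝ) *
          (9 * (2 - log d) * ((d + (s + x)) ^ (1 / 8 : ℝ) * s ^ (-(1 / 8) : ℝ))) *
        ((s ^ (-(1 / 4) : ℝ) * x ^ (-(1 / 4) : ℝ)) * (d + (s + x)) ^ (-p)) := by
        unfold radialKernel; gcongr
    _ = 9 * (2 - log d) * s ^ (-(7 / 8) : ℝ) * x ^ (-(1 / 4) : ℝ) *
        ((d + (s + x)) ^ (1 / 8 : ℝ) * (d + (s + x)) ^ (-p)) := by rw [collect_powers]; ring
    _ ≤ 9 * (2 - log d) * s ^ (-(7 / 8) : ℝ) * x ^ (-(1 / 4) : ℝ) *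
        ((d + s) ^ (-(1 / 8 + (p - 1) / 2)) * (d + x) ^ (-(3 / 4 + (p - 1) / 2))) := by gcongr
    _ = _ := by ring

theorem lintegral_Ioo_Ioi_radialKernel_le {p d : ℝ} (hp : 1 < p) (hd : 0 < d) (hd2 : d ≤ 2) :
    ∫⁻ s in Ioo (0 : ℝ) 1, ∫⁻ x in Ioi 0, ENNReal.ofReal (radialKernel p d s x) ≤
      ENNReal.ofReal (9 * (8 + 2 / (p - 1)) ^ 2 * (d ^ (1 - p) * (2 - log d))) := by
  set P := fun s : ℝ => ENNReal.ofReal (s ^ (-(7 / 8) : ℝ) * (d + s) ^ (-(1 / 8 + (p - 1) / 2)))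
  set Q := fun x : ℝ => ENNReal.ofReal (x ^ (-(1 / 4) : ℝ) * (d + x) ^ (-(3 / 4 + (p - 1) / 2)))
  have : 0 < p - 1 := sub_pos.2 hp
  have log_nonneg : 0 ≤ 9 * (2 - log d) := by linarith [log_le_one_of_le_two hd hd2]
  have separated (s : ℝ) (hs : s ∈ Ioo 0 1) (x : ℝ) (hx : x ∈ Ioi 0) :
      ENNReal.ofReal (radialKernel p d s x) ≤
        ENNReal.ofReal (9 * (2 - log d)) * (P s * Q x) := by
    have hs0 : 0 < s := hs.1
    rw [← ENNReal.ofReal_mul (by positivity), ← ENNReal.ofReal_mul log_nonneg]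
    exact ENNReal.ofReal_le_ofReal (radialKernel_le hp hd hd2 hs0 hx)
  have integral_le {b c : ℝ} (hb : b < 1) (hc : b + c = 1 + (p - 1) / 2)
      (hb_inv : (1 - b)⁻¹ ≤ 8) :
      ∫⁻ x in Ioi 0, ENNReal.ofReal (x ^ (-b) * (d + x) ^ (-c)) ≤
        ENNReal.ofReal ((8 + 2 / (p - 1)) * d ^ (-((p - 1) / 2))) := by
    refine (lintegral_rpow_mul_add_rpow_le hb (by linarith) hd).trans
      (ENNReal.ofReal_le_ofReal ?_)
    rw [show b + c - 1 = (p - 1) / 2 by linarith, show 1 - b - c = -((p - 1) / 2) by linarith,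
      inv_div]
    gcongr
  have integral_P : ∫⁻ s in Ioo 0 1, P s ≤
      ENNReal.ofReal ((8 + 2 / (p - 1)) * d ^ (-((p - 1) / 2))) :=
    (lintegral_mono_set Ioo_subset_Ioi_self).trans
      (integral_le (by norm_num) (by ring) (by norm_num))
  have integral_Q : ∫⁻ x in Ioi 0, Q x ≤
      ENNReal.ofReal ((8 + 2 / (p - 1)) * d ^ (-((p - 1) / 2))) :=
    integral_le (by norm_num) (by ring) (by norm_num)
  have hQ : ∫⁻ x in Ioi 0, Q x ≠ ⊤ := ne_top_of_le_ne_top ENNReal.ofReal_ne_top integral_Q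
  calc _ ≤ ∫⁻ s in Ioo (0 : ℝ) 1, ∫⁻ x in Ioi 0, ENNReal.ofReal (9 * (2 - log d)) * (P s * Q x) :=
        setLIntegral_mono' measurableSet_Ioo fun s hs =>
          setLIntegral_mono' measurableSet_Ioi (separated s hs)
    _ = ENNReal.ofReal (9 * (2 - log d)) * ((∫⁻ s in Ioo 0 1, P s) * ∫⁻ x in Ioi 0, Q x) := by
        simp only [lintegral_const_mul' _ _ ENNReal.ofReal_ne_top, P]
        rw [lintegral_mul_const' _ _ hQ]
    _ ≤ ENNReal.ofReal (9 * (2 - log d)) *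
          (ENNReal.ofReal ((8 + 2 / (p - 1)) * d ^ (-((p - 1) / 2))) *
            ENNReal.ofReal ((8 + 2 / (p - 1)) * d ^ (-((p - 1) / 2)))) := by gcongr
    _ = _ := by
        rw [← ENNReal.ofReal_mul (by positivity), ← ENNReal.ofReal_mul log_nonneg,
          show 1 - p = -((p - 1) / 2) + -((p - 1) / 2) by ring, rpow_add hd]
        ring_nf

theorem lintegral_radialKernel_chord_le {p d : ℝ} (hp : 1 < p) (hd : 0 < d) (hd2 : d ≤ 2)
    (θ : ℝ) :
    ∫⁻ s in Ioo (0 : ℝ) 1, ∫⁻ θ' in Ioc 0 (2 * π),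
        ENNReal.ofReal (radialKernel p d s ‖cpt θ - cpt θ'‖) ≤
      ENNReal.ofReal (36 * (8 + 2 / (p - 1)) ^ 2 * (d ^ (1 - p) * (2 - log d))) := by
  calc _ ≤ ∫⁻ s in Ioo (0 : ℝ) 1, 4 * ∫⁻ x in Ioi 0, ENNReal.ofReal (radialKernel p d s x) :=
        setLIntegral_mono' measurableSet_Ioo fun s hs =>
          lintegral_chord_le (fun x hx y hy hxy => ENNReal.ofReal_le_ofReal
            (antitoneOn_radialKernel (by linarith) hd hs hx hy hxy)) θ
    _ ≤ 4 * ENNReal.ofReal (9 * (8 + 2 / (p - 1)) ^ 2 * (d ^ (1 - p) * (2 - log d))) := by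
        rw [lintegral_const_mul' _ _ (by norm_num)]
        gcongr
        exact lintegral_Ioo_Ioi_radialKernel_le hp hd hd2
    _ = _ := by
        rw [← ENNReal.ofReal_ofNat, ← ENNReal.ofReal_mul (by norm_num)]
        ring_nf

theorem enorm_cpt (θ : ℝ) : ‖cpt θ‖ₑ = 1 := by rw [← ofReal_norm, norm_cpt, ENNReal.ofReal_one]

theorem ofReal_sub_mul_enorm_le_lintegral_circle {h : ℂ → ℂ} {r t : ℝ}
    (hh : DifferentiableOn ℂ h (Metric.closedBall 0 r)) (ht : 0 ≤ t) (htr : t < r) (θ₀ : ℝ) :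
    ENNReal.ofReal (r - t) * ‖h (t * cpt θ₀)‖ₑ ≤
      ENNReal.ofReal r * ∫⁻ θ in Ioc 0 (2 * π), ‖h (r * cpt θ)‖ₑ := by
  set w := (t : ℂ) * cpt θ₀
  have hr : 0 ≤ r := ht.trans htr.le
  have hrt : 0 < r - t := sub_pos.2 htr
  have norm_w : ‖w‖ = t := norm_ofReal_mul_cpt ht θ₀
  have cauchy := hh.circleIntegral_sub_inv_smul (w := w) (by simpa [norm_w] using htr)
  have kernel_le (θ : ℝ) :
      ‖deriv (circleMap 0 r) θ • ((circleMap 0 r θ - w)⁻¹ • h (circleMap 0 r θ))‖ₑ ≤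
        ENNReal.ofReal (r * (r - t)⁻¹) * ‖h (r * cpt θ)‖ₑ := by
    have circleMap_eq : circleMap 0 r θ = r * cpt θ := by simp [circleMap, cpt]
    have dist_le : r - t ≤ ‖(r : ℂ) * cpt θ - w‖ := by
      simpa only [norm_ofReal_mul_cpt hr, norm_w] using norm_sub_norm_le ((r : ℂ) * cpt θ) w
    have norm_le : ‖deriv (circleMap 0 r) θ * ((r : ℂ) * cpt θ - w)⁻¹‖ ≤ r * (r - t)⁻¹ := by
      rw [norm_mul, norm_inv, deriv_circleMap, norm_mul, Complex.norm_I, mul_one, circleMap_eq,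
        norm_ofReal_mul_cpt hr]
      gcongr
    rw [circleMap_eq, smul_eq_mul, smul_eq_mul, ← mul_assoc, enorm_mul, ← ofReal_norm]
    gcongr
  have norm_two_pi_I : ‖(2 * π * Complex.I : ℂ)‖ₑ = ENNReal.ofReal (2 * π) := by
    rw [← ofReal_norm]; simp [abs_of_pos pi_pos]
  have integral_le : ENNReal.ofReal (2 * π) * ‖h w‖ₑ ≤
      ENNReal.ofReal (r * (r - t)⁻¹) * ∫⁻ θ in Ioc 0 (2 * π), ‖h (r * cpt θ)‖ₑ := by
    rw [← norm_two_pi_I, ← enorm_mul, ← smul_eq_mul (2 * π * Complex.I : ℂ), ← cauchy,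
      circleIntegral, intervalIntegral.integral_of_le two_pi_pos.le,
      ← lintegral_const_mul' _ _ ENNReal.ofReal_ne_top]
    exact (enorm_integral_le_lintegral_enorm _).trans (lintegral_mono kernel_le)
  calc ENNReal.ofReal (r - t) * ‖h w‖ₑ
      ≤ ENNReal.ofReal (r - t) * (ENNReal.ofReal (2 * π) * ‖h w‖ₑ) := by
        gcongr
        exact le_mul_of_one_le_left' (ENNReal.one_le_ofReal.2 (by linarith [pi_gt_three]))
    _ ≤ ENNReal.ofReal (r - t) *
        (ENNReal.ofReal (r * (r - t)⁻¹) * ∫⁻ θ in Ioc 0 (2 * π), ‖h (r * cpt θ)‖ₑ) := by gcongr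
    _ = _ := by
        rw [← mul_assoc, ← ENNReal.ofReal_mul hrt.le, mul_left_comm, mul_inv_cancel₀ hrt.ne',
          mul_one]

-- Cauchy's formula is used on the circle of radius `(1 + t) / 2`, whose gap to `t` is comparable to
-- `1 - t`.
theorem lintegral_ray_enorm_le {h : ℂ → ℂ} (hh : DifferentiableOn ℂ h unitDisc)
    (hm : Measurable h) (θ₀ : ℝ) :
    ∫⁻ t in Ioo (0 : ℝ) 1, ENNReal.ofReal (1 - t) * ‖h (t * cpt θ₀)‖ₑ ≤
      4 * ∫⁻ z in unitDisc, ‖h z‖ₑ := by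
  set F : ℝ → ENNReal := fun r => ENNReal.ofReal r * ∫⁻ θ in Ioc 0 (2 * π), ‖h (r * cpt θ)‖ₑ
  have circle_le (t : ℝ) (ht : t ∈ Ioo 0 1) :
      ENNReal.ofReal (1 - t) * ‖h (t * cpt θ₀)‖ₑ ≤ 2 * F ((1 + t) / 2) := by
    have hsub : Metric.closedBall 0 ((1 + t) / 2) ⊆ unitDisc :=
      Metric.closedBall_subset_ball (by linarith [ht.2])
    have := ofReal_sub_mul_enorm_le_lintegral_circle (hh.mono hsub) ht.1.le
      (by linarith [ht.2] : t < (1 + t) / 2) θ₀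
    rw [show 1 - t = 2 * ((1 + t) / 2 - t) by ring, ENNReal.ofReal_mul zero_le_two,
      ENNReal.ofReal_ofNat, mul_assoc]
    gcongr
  have change_of_variables := lintegral_image_eq_lintegral_abs_deriv_mul
    (f := fun t : ℝ => (1 + t) / 2) (f' := fun _ => 1 / 2) (s := Ioo 0 1) measurableSet_Ioo
    (fun x _ => (((hasDerivAt_id x).const_add 1).div_const 2).hasDerivWithinAt)
    (fun x _ y _ hxy => by simpa using hxy) F
  have image_subset : (fun t : ℝ => (1 + t) / 2) '' Ioo 0 1 ⊆ Ioo 0 1 := by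
    rintro _ ⟨t, ht, rfl⟩
    constructor <;> linarith [ht.1, ht.2]
  have jacobian : (2 : ENNReal) = 4 * ENNReal.ofReal |(1 / 2 : ℝ)| := by
    rw [← ENNReal.ofReal_ofNat, ← ENNReal.ofReal_ofNat, ← ENNReal.ofReal_mul (by norm_num)]
    norm_num
  calc _ ≤ ∫⁻ t in Ioo (0 : ℝ) 1, 2 * F ((1 + t) / 2) :=
        setLIntegral_mono' measurableSet_Ioo circle_le
    _ = 4 * ∫⁻ r in (fun t : ℝ => (1 + t) / 2) '' Ioo 0 1, F r := by
        rw [change_of_variables, jacobian, ← lintegral_const_mul' _ _ (by norm_num)]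
        simp only [mul_assoc]
    _ ≤ 4 * ∫⁻ r in Ioo (0 : ℝ) 1, F r := by gcongr
    _ = _ := by rw [lintegral_unitDisc_polar (F := fun z => ‖h z‖ₑ) (by fun_prop)]

theorem lintegral_inv_one_sub {R : ℝ} (hR : 0 ≤ R) (hR1 : R < 1) :
    ∫⁻ t in Ioc 0 R, ENNReal.ofReal (1 - t)⁻¹ = ENNReal.ofReal (-log (1 - R)) := by
  have primitive (t : ℝ) (ht : t ∈ uIcc 0 R) :
      HasDerivAt (fun t : ℝ => -log (1 - t)) (1 - t)⁻¹ t := by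
    rw [uIcc_of_le hR] at ht
    have := (((hasDerivAt_id' t).const_sub 1).log (by linarith [ht.2])).neg
    rwa [neg_div, neg_neg, one_div] at this
  have integrable : IntervalIntegrable (fun t : ℝ => (1 - t)⁻¹) volume 0 R :=
    (ContinuousOn.inv₀ (by fun_prop) fun t ht => by linarith [ht.2]).intervalIntegrable_of_Icc hR
  have integral_eq := intervalIntegral.integral_eq_sub_of_hasDerivAt primitive integrable
  rw [intervalIntegral.integral_of_le hR, sub_zero, log_one, neg_zero, sub_zero] at integral_eq
  rw [← integral_eq, ofReal_integral_eq_lintegral_ofReal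
    ((intervalIntegrable_iff_integrableOn_Ioc_of_le hR).1 integrable)]
  exact (ae_restrict_iff' measurableSet_Ioc).2
    (.of_forall fun t ht => inv_nonneg.2 (by linarith [ht.2]))

theorem enorm_sub_le_lintegral_deriv_ray {g : ℂ → ℂ} (hg : DifferentiableOn ℂ g unitDisc) {R : ℝ}
    (hR : 0 ≤ R) (hR1 : R < 1) (θ : ℝ) :
    ‖g (R * cpt θ) - g 0‖ₑ ≤ ∫⁻ t in Ioc 0 R, ‖deriv g (t * cpt θ)‖ₑ := by
  have isOpen_disc : IsOpen unitDisc := Metric.isOpen_ball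
  have ray_subset (t : ℝ) (ht : t ∈ Icc 0 R) : (t : ℂ) * cpt θ ∈ unitDisc :=
    ofReal_mul_cpt_mem_unitDisc ht.1 (ht.2.trans_lt hR1) θ
  have hasDerivAt_ray (t : ℝ) (ht : t ∈ uIcc 0 R) :
      HasDerivAt (fun t : ℝ => g (t * cpt θ)) (deriv g (t * cpt θ) * cpt θ) t := by
    rw [uIcc_of_le hR] at ht
    have inner : HasDerivAt (fun t : ℝ => (t : ℂ) * cpt θ) (cpt θ) t := by
      simpa using (Complex.ofRealCLM.hasDerivAt (x := t)).mul_const (cpt θ)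
    exact (hg.differentiableAt (isOpen_disc.mem_nhds (ray_subset t ht))).hasDerivAt.comp t inner
  have continuousOn_deriv : ContinuousOn (fun t : ℝ => deriv g (t * cpt θ) * cpt θ) (Icc 0 R) :=
    ((hg.deriv isOpen_disc).continuousOn.comp (by fun_prop) ray_subset).mul continuousOn_const
  have ftc := intervalIntegral.integral_eq_sub_of_hasDerivAt hasDerivAt_ray
    (continuousOn_deriv.intervalIntegrable_of_Icc hR)
  rw [Complex.ofReal_zero, zero_mul, intervalIntegral.integral_of_le hR] at ftc
  rw [← ftc]
  refine (enorm_integral_le_lintegral_enorm _).trans_eq ?_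
  simp only [enorm_mul, enorm_cpt, mul_one]

theorem enorm_sub_sq_le_mul_log {g : ℂ → ℂ} (hg : DifferentiableOn ℂ g unitDisc) {R : ℝ}
    (hR : 0 ≤ R) (hR1 : R < 1) (θ : ℝ) :
    ‖g (R * cpt θ) - g 0‖ₑ ^ 2 ≤
      4 * (∫⁻ z in unitDisc, ‖deriv g z‖ₑ ^ 2) * ENNReal.ofReal (-log (1 - R)) := by
  have hgm : Measurable (deriv g) := measurable_deriv g
  have sqrt_pos (t : ℝ) (ht : t ∈ Ioc 0 R) : 0 < √(1 - t) := Real.sqrt_pos.2 (by linarith [ht.2])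
  have sq_sqrt (t : ℝ) (ht : t ∈ Ioc 0 R) : √(1 - t) ^ 2 = 1 - t :=
    Real.sq_sqrt (by linarith [ht.2])
  have ray_energy_le : ∫⁻ t in Ioc 0 R, (ENNReal.ofReal √(1 - t) * ‖deriv g (t * cpt θ)‖ₑ) ^ 2 ≤
      4 * ∫⁻ z in unitDisc, ‖deriv g z‖ₑ ^ 2 := by
    have ray := lintegral_ray_enorm_le ((hg.deriv Metric.isOpen_ball).pow 2) (hgm.pow_const 2) θ
    simp only [Pi.pow_apply, enorm_pow] at ray
    refine le_trans (setLIntegral_mono' measurableSet_Ioc fun t ht => ?_)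
      ((lintegral_mono_set (Ioc_subset_Ioo_right hR1)).trans ray)
    rw [mul_pow, ← ENNReal.ofReal_pow (by positivity), sq_sqrt t ht]
  calc ‖g (R * cpt θ) - g 0‖ₑ ^ 2
      ≤ (∫⁻ t in Ioc 0 R, (ENNReal.ofReal √(1 - t) * ‖deriv g (t * cpt θ)‖ₑ) *
          ENNReal.ofReal (√(1 - t))⁻¹) ^ 2 := by
        gcongr
        refine (enorm_sub_le_lintegral_deriv_ray hg hR hR1 θ).trans_eq
          (setLIntegral_congr_fun measurableSet_Ioc fun t ht => ?_)
        rw [mul_right_comm, ← ENNReal.ofReal_mul (sqrt_pos t ht).le,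
          mul_inv_cancel₀ (sqrt_pos t ht).ne', ENNReal.ofReal_one, one_mul]
    _ ≤ (∫⁻ t in Ioc 0 R, (ENNReal.ofReal √(1 - t) * ‖deriv g (t * cpt θ)‖ₑ) ^ 2) *
          ∫⁻ t in Ioc 0 R, ENNReal.ofReal (√(1 - t))⁻¹ ^ 2 :=
        sq_lintegral_mul_le (by fun_prop) (by fun_prop)
    _ = (∫⁻ t in Ioc 0 R, (ENNReal.ofReal √(1 - t) * ‖deriv g (t * cpt θ)‖ₑ) ^ 2) *
          ENNReal.ofReal (-log (1 - R)) := by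
        rw [← lintegral_inv_one_sub hR hR1]
        congr 1
        refine setLIntegral_congr_fun measurableSet_Ioc fun t ht => ?_
        rw [← ENNReal.ofReal_pow (by positivity), inv_pow, sq_sqrt t ht]
    _ ≤ _ := by gcongr

theorem exists_norm_sq_le_log {g : ℂ → ℂ} (hg : DifferentiableOn ℂ g unitDisc)
    (hi : ∫⁻ z in unitDisc, ‖deriv g z‖ₑ ^ 2 ≠ ⊤) :
    ∃ C : ℝ, 0 ≤ C ∧ ∀ w ∈ unitDisc, ‖g w‖ ^ 2 ≤ C * (1 - log (1 - ‖w‖)) := by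
  set A := (4 * ∫⁻ z in unitDisc, ‖deriv g z‖ₑ ^ 2).toReal
  have hA : 0 ≤ A := ENNReal.toReal_nonneg
  refine ⟨2 * ‖g 0‖ ^ 2 + 2 * A, by positivity, fun w hw => ?_⟩
  rw [mem_unitDisc] at hw
  have log_nonneg : 0 ≤ -log (1 - ‖w‖) :=
    neg_nonneg.2 (log_nonpos (by linarith) (by linarith [norm_nonneg w]))
  have sub_sq_le : ‖g w - g 0‖ ^ 2 ≤ A * -log (1 - ‖w‖) := by
    have := enorm_sub_sq_le_mul_log hg (norm_nonneg w) hw w.arg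
    rw [cpt, Complex.norm_mul_exp_arg_mul_I, ← ENNReal.ofReal_toReal
      (ENNReal.mul_ne_top (by norm_num) hi), ← ENNReal.ofReal_mul hA, ← ofReal_norm,
      ← ENNReal.ofReal_pow (norm_nonneg _)] at this
    exact (ENNReal.ofReal_le_ofReal_iff (mul_nonneg hA log_nonneg)).1 this
  have triangle : ‖g w‖ ^ 2 ≤ 2 * (‖g w - g 0‖ ^ 2 + ‖g 0‖ ^ 2) :=
    (pow_le_pow_left₀ (norm_nonneg _) (by simpa using norm_add_le (g w - g 0) (g 0)) 2).trans
      add_sq_le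
  nlinarith [mul_nonneg (sq_nonneg ‖g 0‖) log_nonneg]

section Herglotz

variable {u : ℂ → ℝ} {w : ℂ}

theorem circleAverage_zero_one {F : Type*} [NormedAddCommGroup F] [NormedSpace ℝ F] (f : ℂ → F) :
    circleAverage f 0 1 = (2 * π)⁻¹ • ∫ θ in Ioc 0 (2 * π), f (cpt θ) := by
  rw [circleAverage_def, circleMap_zero_one, intervalIntegral.integral_of_le two_pi_pos.le]

theorem circleIntegrable_zero_one {F : Type*} [NormedAddCommGroup F] {f : ℂ → F} :
    CircleIntegrable f 0 1 ↔ IntegrableOn (fun θ => f (cpt θ)) (Ioc 0 (2 * π)) := by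
  rw [circleIntegrable_def, circleMap_zero_one,
    intervalIntegrable_iff_integrableOn_Ioc_of_le two_pi_pos.le]

theorem circleIntegrable_ofReal (hu : CircleIntegrable u 0 1) :
    CircleIntegrable (fun ζ => (u ζ : ℂ)) 0 1 :=
  (circleIntegrable_zero_one (f := fun ζ => (u ζ : ℂ))).2 (circleIntegrable_zero_one.1 hu).ofReal

theorem circleAverage_poissonKernel (hw : w ∈ unitDisc) :
    circleAverage (poissonKernel 0 w) 0 1 = 1 := by
  have := InnerProductSpace.HarmonicContOnCl.circleAverage_poissonKernel_smul
    (InnerProductSpace.harmonicContOnCl_const (c := (1 : ℝ))) hw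
  simpa only [smul_eq_mul, Pi.mul_def, mul_one] using this

theorem circleAverage_two_mul_div_sub_sq (w : ℂ) :
    circleAverage (fun ζ => 2 * ζ / (ζ - w) ^ 2) 0 1 = 0 := by
  have cancel : EqOn (fun ζ : ℂ => (ζ - 0)⁻¹ • (2 * ζ / (ζ - w) ^ 2))
      (fun ζ => 2 * (ζ - w) ^ (-2 : ℤ)) (Metric.sphere 0 1) := fun ζ hζ => by
    have : ζ ≠ 0 := ne_zero_of_mem_unit_sphere ⟨ζ, hζ⟩
    simp only [sub_zero, smul_eq_mul, zpow_neg, zpow_ofNat]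
    field_simp
  rw [circleAverage_eq_circleIntegral one_ne_zero, circleIntegral.integral_congr zero_le_one cancel,
    circleIntegral.integral_const_mul, circleIntegral.integral_sub_zpow_of_ne (by norm_num),
    mul_zero, smul_zero]

/-- The exponential of the Herglotz transform of a real function `u` on the unit circle, that is,
the outer function with boundary modulus `exp u`. -/
noncomputable def herglotzExp (u : ℂ → ℝ) (z : ℂ) : ℂ :=
  Complex.exp (circleAverage (fun ζ => herglotzRieszKernel 0 z ζ • (u ζ : ℂ)) 0 1)

theorem outerFun_eq_herglotzExp (ω : ℝ → ℝ) (E : Set ℂ) :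
    outerFun ω E = herglotzExp fun ζ => log (ω (dE E ζ)) := by
  funext z
  simp only [outerFun, herglotzExp, circleAverage_zero_one, herglotzRieszKernel_def, sub_zero,
    smul_eq_mul, Complex.real_smul]

theorem norm_herglotzExp (hu : CircleIntegrable u 0 1) (hw : w ∈ unitDisc) (c : ℝ) :
    ‖herglotzExp u w‖ =
      exp (c + circleAverage (fun ζ => poissonKernel 0 w ζ * (u ζ - c)) 0 1) := by
  have continuousOn_kernel : ContinuousOn (poissonKernel 0 w) (Metric.sphere 0 |1|) := by
    rw [poissonKernel_eq_re_herglotzRieszKernel]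
    exact Complex.continuous_re.comp_continuousOn (continuousOn_herglotzRieszKernel_sphere hw)
  have average_kernel : circleAverage (fun ζ => c • poissonKernel 0 w ζ) 0 1 = c := by
    rw [circleAverage_fun_smul, circleAverage_poissonKernel hw, smul_eq_mul, mul_one]
  have average_sub : circleAverage (fun ζ => poissonKernel 0 w ζ * (u ζ - c)) 0 1 =
      circleAverage (poissonKernel 0 w • u) 0 1 - c := by
    have := circleAverage_fun_sub (hu.continuousOn_smul continuousOn_kernel)
      (continuousOn_kernel.circleIntegrable'.const_fun_smul (a := c))
    rw [average_kernel] at this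
    rw [← this]
    congr 1
    funext ζ
    simp only [Pi.smul_apply', smul_eq_mul]
    ring
  rw [herglotzExp, Complex.norm_exp, re_circleAverage_herglotzRieszKernel_smul hu hw,
    ← poissonKernel_eq_re_herglotzRieszKernel, average_sub, add_sub_cancel]

theorem hasDerivAt_herglotzExp (hu : CircleIntegrable u 0 1) (hw : w ∈ unitDisc) (c : ℝ) :
    HasDerivAt (herglotzExp u) (herglotzExp u w *
      circleAverage (fun ζ => 2 * ζ / (ζ - w) ^ 2 * ((u ζ - c : ℝ) : ℂ)) 0 1) w := by
  have continuousOn_kernel :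
      ContinuousOn (fun ζ => 2 * ζ / (ζ - w) ^ 2) (Metric.sphere (0 : ℂ) |1|) := by
    refine ContinuousOn.div (by fun_prop) (by fun_prop) fun ζ hζ => pow_ne_zero 2 (sub_ne_zero.2 ?_)
    rintro rfl
    rw [abs_one, mem_sphere_zero_iff_norm] at hζ
    exact (mem_unitDisc.1 hw).ne hζ
  have average_kernel : circleAverage (fun ζ => (c : ℂ) • (2 * ζ / (ζ - w) ^ 2)) 0 1 = 0 := by
    rw [circleAverage_fun_smul, circleAverage_two_mul_div_sub_sq w, smul_zero]
  have average_sub : circleAverage (fun ζ => 2 * ζ / (ζ - w) ^ 2 * ((u ζ - c : ℝ) : ℂ)) 0 1 =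
      circleAverage (fun ζ => (2 * ζ / (ζ - w) ^ 2) • (u ζ : ℂ)) 0 1 := by
    have := circleAverage_fun_sub
      ((circleIntegrable_ofReal hu).continuousOn_smul continuousOn_kernel)
      (continuousOn_kernel.circleIntegrable'.const_fun_smul (a := (c : ℂ)))
    rw [average_kernel, sub_zero] at this
    refine Eq.trans ?_ this
    congr 1
    funext ζ
    simp only [Pi.smul_apply', smul_eq_mul, Complex.ofReal_sub]
    ring
  rw [average_sub]
  exact (hasDerivAt_circleAverage_herglotzRieszKernel_smul (circleIntegrable_ofReal hu) hw).cexp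

theorem differentiableOn_herglotzExp (hu : CircleIntegrable u 0 1) :
    DifferentiableOn ℂ (herglotzExp u) unitDisc :=
  (differentiableOn_circleAverage_herglotzRieszKernel_smul (circleIntegrable_ofReal hu)).cexp

theorem add_chord_div_three_le {s : ℝ} (hs : s ∈ Ioo 0 1) (θ θ' : ℝ) :
    (s + ‖cpt θ - cpt θ'‖) / 3 ≤ ‖cpt θ' - ((1 - s : ℝ) : ℂ) * cpt θ‖ := by
  have gap_le := norm_sub_norm_le (cpt θ') (((1 - s : ℝ) : ℂ) * cpt θ)
  rw [norm_cpt, norm_ofReal_mul_cpt (by linarith [hs.2])] at gap_le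
  have chord_le := norm_sub_le ((s : ℂ) * cpt θ) (cpt θ' - ((1 - s : ℝ) : ℂ) * cpt θ)
  rw [norm_ofReal_mul_cpt hs.1.le, show (s : ℂ) * cpt θ - (cpt θ' - ((1 - s : ℝ) : ℂ) * cpt θ) =
    cpt θ - cpt θ' by push_cast; ring] at chord_le
  linarith

theorem poissonKernel_cpt_nonneg {s : ℝ} (hs : s ∈ Ioo 0 1) (θ θ' : ℝ) :
    0 ≤ poissonKernel 0 (((1 - s : ℝ) : ℂ) * cpt θ) (cpt θ') := by
  simp only [poissonKernel_def, sub_zero, norm_cpt, norm_ofReal_mul_cpt (sub_nonneg.2 hs.2.le)]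
  exact div_nonneg (by nlinarith [hs.1, hs.2]) (by positivity)

theorem poissonKernel_cpt_le {s : ℝ} (hs : s ∈ Ioo 0 1) (θ θ' : ℝ) :
    poissonKernel 0 (((1 - s : ℝ) : ℂ) * cpt θ) (cpt θ') ≤
      18 * s / (s + ‖cpt θ - cpt θ'‖) ^ 2 := by
  have hs0 : 0 < s := hs.1
  simp only [poissonKernel_def, sub_zero, norm_cpt, norm_ofReal_mul_cpt (sub_nonneg.2 hs.2.le)]
  calc (1 ^ 2 - (1 - s) ^ 2) / ‖cpt θ' - ((1 - s : ℝ) : ℂ) * cpt θ‖ ^ 2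
      ≤ 2 * s / ((s + ‖cpt θ - cpt θ'‖) / 3) ^ 2 := by
        gcongr
        · nlinarith
        · exact add_chord_div_three_le hs θ θ'
    _ = _ := by field_simp; norm_num

theorem integral_le_of_lintegral_ofReal_le {α : Type*} [MeasurableSpace α] {μ : Measure α}
    {f : α → ℝ} {C : ℝ} (hC : 0 ≤ C) (hf : ∫⁻ x, ENNReal.ofReal (f x) ∂μ ≤ ENNReal.ofReal C) :
    ∫ x, f x ∂μ ≤ C := by
  by_cases integrable : Integrable f μ
  · rw [integral_eq_lintegral_pos_part_sub_lintegral_neg_part integrable]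
    exact (sub_le_self _ ENNReal.toReal_nonneg).trans (ENNReal.toReal_le_of_le_ofReal hC hf)
  · rwa [integral_undef integrable]

theorem norm_herglotzExp_le {A c s θ : ℝ} (hu : CircleIntegrable u 0 1) (hA : 0 ≤ A)
    (hs : s ∈ Ioo 0 1) (huc : ∀ᵐ θ' ∂volume.restrict (Ioc 0 (2 * π)),
      u (cpt θ') - c ≤ A * ((s + ‖cpt θ - cpt θ'‖) / s) ^ (1 / 2 : ℝ)) :
    ‖herglotzExp u (((1 - s : ℝ) : ℂ) * cpt θ)‖ ≤ exp (c + 36 * A) := by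
  set w := ((1 - s : ℝ) : ℂ) * cpt θ
  have hs0 : 0 < s := hs.1
  have hw : w ∈ unitDisc := ofReal_mul_cpt_mem_unitDisc (by linarith [hs.2]) (by linarith [hs.1]) θ
  have simplify_powers {τ : ℝ} (hτ : 0 < τ) : 18 * s / τ ^ 2 * (A * (τ / s) ^ (1 / 2 : ℝ)) =
      18 * A * s ^ (1 / 2 : ℝ) * τ ^ (-(3 / 2) : ℝ) := by
    rw [div_rpow hτ.le hs0.le, show -(3 / 2 : ℝ) = 1 / 2 - (2 : ℕ) by norm_num,
      rpow_sub_natCast hτ.ne']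
    have : s ^ (1 / 2 : ℝ) * s ^ (1 / 2 : ℝ) = s := by rw [← rpow_add hs0]; norm_num
    field_simp
    linear_combination -A * this
  have integrand_le : ∀ᵐ θ' ∂volume.restrict (Ioc 0 (2 * π)),
      ENNReal.ofReal (poissonKernel 0 w (cpt θ') * (u (cpt θ') - c)) ≤
        ENNReal.ofReal (18 * A * s ^ (1 / 2 : ℝ)) *
          ENNReal.ofReal ((s + ‖cpt θ - cpt θ'‖) ^ (-(3 / 2) : ℝ)) := by
    filter_upwards [huc] with θ' hθ'
    rw [← ENNReal.ofReal_mul (by positivity), ← simplify_powers (by positivity)]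
    refine ENNReal.ofReal_le_ofReal ?_
    exact mul_le_mul_of_nonneg_left hθ' (poissonKernel_cpt_nonneg hs θ θ') |>.trans
      (mul_le_mul_of_nonneg_right (poissonKernel_cpt_le hs θ θ') (by positivity))
  have integral_le : ∫ θ' in Ioc 0 (2 * π), poissonKernel 0 w (cpt θ') * (u (cpt θ') - c) ≤
      216 * A := by
    refine integral_le_of_lintegral_ofReal_le (by positivity)
      ((lintegral_mono_ae integrand_le).trans ?_)
    rw [lintegral_const_mul' _ _ ENNReal.ofReal_ne_top]
    refine (mul_le_mul_right (lintegral_add_chord_rpow_le (by norm_num) hs0 θ) _).trans_eq ?_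
    rw [← ENNReal.ofReal_mul (by positivity)]
    have : s ^ (1 / 2 : ℝ) * s ^ (1 - 3 / 2 : ℝ) = 1 := by rw [← rpow_add hs0]; norm_num
    congr 1
    linear_combination 216 * A * this
  rw [norm_herglotzExp hu hw c, circleAverage_zero_one, exp_le_exp, smul_eq_mul]
  refine add_le_add_right ?_ c
  rw [inv_mul_le_iff₀ two_pi_pos]
  nlinarith [pi_gt_three]

theorem enorm_deriv_herglotzExp_le {s : ℝ} (hu : CircleIntegrable u 0 1) (hs : s ∈ Ioo 0 1)
    (c θ : ℝ) :
    ‖deriv (herglotzExp u) (((1 - s : ℝ) : ℂ) * cpt θ)‖ₑ ≤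
      ‖herglotzExp u (((1 - s : ℝ) : ℂ) * cpt θ)‖ₑ * ∫⁻ θ' in Ioc 0 (2 * π),
        ENNReal.ofReal (3 * (|u (cpt θ') - c| / (s + ‖cpt θ - cpt θ'‖) ^ 2)) := by
  set w := ((1 - s : ℝ) : ℂ) * cpt θ
  have hs0 : 0 < s := hs.1
  have hw : w ∈ unitDisc := ofReal_mul_cpt_mem_unitDisc (by linarith [hs.2]) (by linarith [hs.1]) θ
  have kernel_le (θ' : ℝ) : ‖2 * cpt θ' / (cpt θ' - w) ^ 2 * ((u (cpt θ') - c : ℝ) : ℂ)‖ₑ ≤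
      ENNReal.ofReal (18 * (|u (cpt θ') - c| / (s + ‖cpt θ - cpt θ'‖) ^ 2)) := by
    rw [← ofReal_norm, norm_mul, norm_div, norm_mul, norm_cpt, norm_pow, Complex.norm_real,
      Complex.norm_ofNat, mul_one, norm_eq_abs]
    refine ENNReal.ofReal_le_ofReal ?_
    calc _ ≤ 2 / ((s + ‖cpt θ - cpt θ'‖) / 3) ^ 2 * |u (cpt θ') - c| := by
          gcongr
          exact add_chord_div_three_le hs θ θ'
      _ = _ := by field_simp; ring
  rw [(hasDerivAt_herglotzExp hu hw c).deriv, enorm_mul, circleAverage_zero_one, enorm_smul]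
  gcongr
  calc _ ≤ ENNReal.ofReal (1 / 6) * ∫⁻ θ' in Ioc 0 (2 * π),
        ENNReal.ofReal (18 * (|u (cpt θ') - c| / (s + ‖cpt θ - cpt θ'‖) ^ 2)) := by
        gcongr
        · rw [Real.enorm_of_nonneg (by positivity), one_div]
          exact ENNReal.ofReal_le_ofReal (inv_anti₀ (by norm_num) (by linarith [pi_gt_three]))
        · exact (enorm_integral_le_lintegral_enorm _).trans (lintegral_mono kernel_le)
    _ = _ := by
        rw [← lintegral_const_mul' _ _ ENNReal.ofReal_ne_top]
        refine lintegral_congr fun θ' => ?_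
        rw [← ENNReal.ofReal_mul (by norm_num)]
        ring_nf

end Herglotz

section Energy

variable {ω : ℝ → ℝ} {β p : ℝ} {D : ℂ → ℝ}

theorem PowerConcaveWeight.log_sub_log_le_rpow {R d d' s t : ℝ} (h : PowerConcaveWeight ω β R)
    (hβ : β ∈ Ioo 0 1) (hd : 0 ≤ d) (hd' : d' ∈ Ioo 0 R) (hs : 0 < s) (hds : d + s < R)
    (ht : 0 ≤ t) (hdd' : d' ≤ d + t) :
    log (ω d') - log (ω (d + s)) ≤ 2 * ((s + t) / s) ^ (1 / 2 : ℝ) := by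
  have hds0 : 0 < d + s := by positivity
  rcases le_total d' (d + s) with hle | hle
  · have : log (ω d') ≤ log (ω (d + s)) :=
      log_le_log (h.pos _ hd') (h.mono hd' ⟨hds0, hds⟩ hle)
    have : 0 ≤ ((s + t) / s) ^ (1 / 2 : ℝ) := by positivity
    linarith
  · have ratio_le : d' / (d + s) ≤ (s + t) / s := by
      rw [div_le_div_iff₀ hds0 hs]
      nlinarith [mul_nonneg hd ht]
    calc log (ω d') - log (ω (d + s))
        ≤ β * log (d' / (d + s)) := h.log_sub_log_le hβ.1 hds0 hle hd'.2
      _ ≤ 1 * log (d' / (d + s)) := by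
          gcongr
          · exact log_nonneg ((one_le_div hds0).2 hle)
          · exact hβ.2.le
      _ ≤ 1 * log ((s + t) / s) := by
          gcongr
          exact div_pos hd'.1 hds0
      _ ≤ 2 * ((s + t) / s) ^ (1 / 2 : ℝ) := by
          have := log_le_rpow_div (x := (s + t) / s) (by positivity) one_half_pos
          linarith

/-- The properties of the distance to a null subset of the unit circle on which the estimates
depend. -/
structure IsCircleGauge (D : ℂ → ℝ) : Prop where
  lipschitz : LipschitzWith 1 D
  le_two : ∀ θ, D (cpt θ) ≤ 2
  ae_pos : ∀ᵐ θ ∂volume.restrict (Ioc 0 (2 * π)), 0 < D (cpt θ)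

namespace IsCircleGauge

theorem abs_sub_le (hD : IsCircleGauge D) (θ θ' : ℝ) :
    |D (cpt θ) - D (cpt θ')| ≤ ‖cpt θ - cpt θ'‖ := by
  simpa only [NNReal.coe_one, one_mul, Real.dist_eq, Complex.dist_eq] using
    hD.lipschitz.dist_le_mul (cpt θ) (cpt θ')

theorem mem_Ioo (hD : IsCircleGauge D) {θ : ℝ} (hθ : 0 < D (cpt θ)) : D (cpt θ) ∈ Ioo 0 π :=
  ⟨hθ, by linarith [hD.le_two θ, pi_gt_three]⟩

theorem add_lt_pi (hD : IsCircleGauge D) {s : ℝ} (hs : s < 1) (θ : ℝ) : D (cpt θ) + s < π := by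
  linarith [hD.le_two θ, pi_gt_three]

end IsCircleGauge

theorem norm_herglotzExp_log_le (h : PowerConcaveWeight ω β π) (hβ : β ∈ Ioo 0 1)
    (hD : IsCircleGauge D) (hu : CircleIntegrable (fun ζ => log (ω (D ζ))) 0 1) {s θ : ℝ}
    (hs : s ∈ Ioo 0 1) (hθ : 0 ≤ D (cpt θ)) :
    ‖herglotzExp (fun ζ => log (ω (D ζ))) (((1 - s : ℝ) : ℂ) * cpt θ)‖ ≤
      exp 72 * ω (D (cpt θ) + s) := by
  have hω : 0 < ω (D (cpt θ) + s) := h.pos _ ⟨by linarith [hs.1], hD.add_lt_pi hs.2 θ⟩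
  have bound := norm_herglotzExp_le (c := log (ω (D (cpt θ) + s))) (A := 2) (θ := θ) hu
    zero_le_two hs ?_
  · rwa [add_comm, exp_add, exp_log hω, show (36 * 2 : ℝ) = 72 by norm_num] at bound
  filter_upwards [hD.ae_pos] with θ' hθ'
  exact h.log_sub_log_le_rpow hβ hθ (hD.mem_Ioo hθ') hs.1 (hD.add_lt_pi hs.2 θ) (norm_nonneg _)
    (by linarith [(abs_le.1 (hD.abs_sub_le θ θ')).1])

theorem sq_lintegral_div_chord_sq_le {g : ℝ → ℝ}
    (hg : AEMeasurable g (volume.restrict (Ioc 0 (2 * π)))) {s : ℝ} (hs : 0 < s) (θ : ℝ) :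
    (∫⁻ θ' in Ioc 0 (2 * π), ENNReal.ofReal (|g θ'| / (s + ‖cpt θ - cpt θ'‖) ^ 2)) ^ 2 ≤
      ENNReal.ofReal (12 * s ^ (-(1 / 2) : ℝ)) * ∫⁻ θ' in Ioc 0 (2 * π),
        ENNReal.ofReal ((s + ‖cpt θ - cpt θ'‖) ^ (-(5 / 2) : ℝ) * g θ' ^ 2) := by
  set τ := fun θ' => s + ‖cpt θ - cpt θ'‖
  have hτ0 (θ' : ℝ) : 0 < τ θ' := by positivity
  have : Measurable τ := by fun_prop
  have sq_rpow (θ' r : ℝ) :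
      ENNReal.ofReal (τ θ' ^ r) ^ 2 = ENNReal.ofReal (τ θ' ^ (2 * r)) := by
    rw [← ENNReal.ofReal_pow (rpow_nonneg (hτ0 θ').le r), ← rpow_mul_natCast (hτ0 θ').le,
      Nat.cast_ofNat, mul_comm r]
  have split (θ' : ℝ) : ENNReal.ofReal (|g θ'| / τ θ' ^ 2) =
      ENNReal.ofReal (τ θ' ^ (-(3 / 4) : ℝ)) *
        (ENNReal.ofReal (τ θ' ^ (-(5 / 4) : ℝ)) * ENNReal.ofReal |g θ'|) := by
    rw [← mul_assoc, ← ENNReal.ofReal_mul (rpow_nonneg (hτ0 θ').le _), ← rpow_add (hτ0 θ'),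
      ← ENNReal.ofReal_mul (rpow_nonneg (hτ0 θ').le _), div_eq_inv_mul, ← rpow_natCast,
      ← rpow_neg (hτ0 θ').le]
    norm_num
  have sq_left (θ' : ℝ) : ENNReal.ofReal (τ θ' ^ (-(3 / 4) : ℝ)) ^ 2 =
      ENNReal.ofReal (τ θ' ^ (-(3 / 2) : ℝ)) := by
    rw [sq_rpow, show 2 * (-(3 / 4) : ℝ) = -(3 / 2) by norm_num]
  have sq_right (θ' : ℝ) :
      (ENNReal.ofReal (τ θ' ^ (-(5 / 4) : ℝ)) * ENNReal.ofReal |g θ'|) ^ 2 =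
        ENNReal.ofReal (τ θ' ^ (-(5 / 2) : ℝ) * g θ' ^ 2) := by
    rw [mul_pow, sq_rpow, ← ENNReal.ofReal_pow (abs_nonneg _), sq_abs,
      ← ENNReal.ofReal_mul (rpow_nonneg (hτ0 θ').le _),
      show 2 * (-(5 / 4) : ℝ) = -(5 / 2) by norm_num]
  have integral_le := lintegral_add_chord_rpow_le (p := 3 / 2) (by norm_num) hs θ
  rw [show 4 * (1 + (3 / 2 - 1)⁻¹) * s ^ (1 - 3 / 2 : ℝ) = 12 * s ^ (-(1 / 2) : ℝ) by norm_num]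
    at integral_le
  calc _ = _ := by rw [lintegral_congr split]
    _ ≤ _ := sq_lintegral_mul_le (by fun_prop) (by fun_prop)
    _ = _ := by rw [lintegral_congr sq_left, lintegral_congr sq_right]
    _ ≤ _ := mul_le_mul_left integral_le _

theorem enorm_deriv_herglotzExp_log_le (h : PowerConcaveWeight ω β π) (hβ : β ∈ Ioo 0 1)
    (hD : IsCircleGauge D) (hu : CircleIntegrable (fun ζ => log (ω (D ζ))) 0 1) {s θ : ℝ}
    (hs : s ∈ Ioo 0 1) (hθ : 0 ≤ D (cpt θ)) :
    ‖deriv (herglotzExp fun ζ => log (ω (D ζ))) (((1 - s : ℝ) : ℂ) * cpt θ)‖ₑ ≤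
      ENNReal.ofReal (3 * exp 72) * ∫⁻ θ' in Ioc 0 (2 * π), ENNReal.ofReal
        (|ω (D (cpt θ) + s) * (log (ω (D (cpt θ'))) - log (ω (D (cpt θ) + s)))| /
          (s + ‖cpt θ - cpt θ'‖) ^ 2) := by
  have hω : 0 < ω (D (cpt θ) + s) := h.pos _ ⟨by linarith [hs.1], hD.add_lt_pi hs.2 θ⟩
  refine (enorm_deriv_herglotzExp_le hu hs (log (ω (D (cpt θ) + s))) θ).trans ?_
  rw [← lintegral_const_mul' _ _ enorm_ne_top, ← lintegral_const_mul' _ _ ENNReal.ofReal_ne_top]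
  refine lintegral_mono fun θ' => ?_
  rw [← ofReal_norm, ← ENNReal.ofReal_mul (norm_nonneg _), ← ENNReal.ofReal_mul (by positivity)]
  refine ENNReal.ofReal_le_ofReal ((mul_le_mul_of_nonneg_right
    (norm_herglotzExp_log_le h hβ hD hu hs hθ) (by positivity)).trans_eq ?_)
  rw [abs_mul, abs_of_pos hω]
  ring

theorem rpow_mul_sq_increment_le (h : PowerConcaveWeight ω β π) (hβ : β ∈ Ioo 0 1)
    (hp : p < 2 - 2 * β) (hD : IsCircleGauge D) {s θ θ' : ℝ} (hs : s ∈ Ioo 0 1)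
    (hθ : 0 < D (cpt θ)) (hθ' : 0 < D (cpt θ')) :
    (s + ‖cpt θ - cpt θ'‖) ^ (-(5 / 2) : ℝ) *
        (ω (D (cpt θ) + s) * (log (ω (D (cpt θ'))) - log (ω (D (cpt θ) + s)))) ^ 2 ≤
      (β⁻¹ + (1 - β - p / 2)⁻¹) ^ 2 * ((s + ‖cpt θ - cpt θ'‖) ^ (-(1 / 2) : ℝ) *
        (incrKernel ω p (D (cpt θ)) (s + ‖cpt θ - cpt θ'‖) +
          incrKernel ω p (D (cpt θ')) (s + ‖cpt θ - cpt θ'‖))) := by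
  have hs0 : 0 < s := hs.1
  have combine_powers : (s + ‖cpt θ - cpt θ'‖) ^ (-(5 / 2) : ℝ) * (s + ‖cpt θ - cpt θ'‖) ^ 2 =
      (s + ‖cpt θ - cpt θ'‖) ^ (-(1 / 2) : ℝ) := by
    rw [← rpow_natCast, ← rpow_add (by positivity)]
    norm_num
  rw [← combine_powers]
  refine (mul_le_mul_of_nonneg_left (h.sq_mul_log_sub_log_add_le hβ hp hθ (hD.mem_Ioo hθ')
    hs0.le (hD.add_lt_pi hs.2 θ) (hD.abs_sub_le θ θ')) (by positivity)).trans_eq ?_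
  ring

theorem exists_enorm_deriv_herglotzExp_log_sq_le (h : PowerConcaveWeight ω β π) (hβ : β ∈ Ioo 0 1)
    (hp : p < 2 - 2 * β) (hD : IsCircleGauge D)
    (hu : CircleIntegrable (fun ζ => log (ω (D ζ))) 0 1) :
    ∃ C : ℝ, 0 ≤ C ∧ ∀ s ∈ Ioo (0 : ℝ) 1, ∀ θ, 0 < D (cpt θ) →
      ‖deriv (herglotzExp fun ζ => log (ω (D ζ))) (((1 - s : ℝ) : ℂ) * cpt θ)‖ₑ ^ 2 ≤
        ENNReal.ofReal (C * s ^ (-(1 / 2) : ℝ)) * ∫⁻ θ' in Ioc 0 (2 * π),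
          ENNReal.ofReal ((s + ‖cpt θ - cpt θ'‖) ^ (-(1 / 2) : ℝ) *
            (incrKernel ω p (D (cpt θ)) (s + ‖cpt θ - cpt θ'‖) +
              incrKernel ω p (D (cpt θ')) (s + ‖cpt θ - cpt θ'‖))) := by
  set B := (β⁻¹ + (1 - β - p / 2)⁻¹) ^ 2
  refine ⟨9 * exp 72 ^ 2 * 12 * B, by positivity, fun s hs θ hθ => ?_⟩
  have hs0 : 0 < s := hs.1
  have increment_measurable : AEMeasurable
      (fun θ' => ω (D (cpt θ) + s) * (log (ω (D (cpt θ'))) - log (ω (D (cpt θ) + s))))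
      (volume.restrict (Ioc 0 (2 * π))) :=
    ((circleIntegrable_zero_one.1 hu).aemeasurable.sub_const _).const_mul _
  refine (pow_le_pow_left' (enorm_deriv_herglotzExp_log_le h hβ hD hu hs hθ.le) 2).trans ?_
  rw [mul_pow]
  refine (mul_le_mul_right (sq_lintegral_div_chord_sq_le increment_measurable hs0 θ) _).trans ?_
  rw [← mul_assoc, ← ENNReal.ofReal_pow (by positivity), ← ENNReal.ofReal_mul (by positivity),
    show (3 * exp 72) ^ 2 * (12 * s ^ (-(1 / 2) : ℝ)) =
      9 * exp 72 ^ 2 * 12 * s ^ (-(1 / 2) : ℝ) by ring, mul_right_comm _ B,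
    ENNReal.ofReal_mul (q := B) (by positivity), mul_assoc (ENNReal.ofReal _),
    ← lintegral_const_mul' _ _ (ENNReal.ofReal_ne_top (r := B))]
  refine mul_le_mul_right (lintegral_mono_ae ?_) _
  filter_upwards [hD.ae_pos] with θ' hθ'
  rw [← ENNReal.ofReal_mul (by positivity)]
  exact ENNReal.ofReal_le_ofReal (rpow_mul_sq_increment_le h hβ hp hD hs hθ hθ')

end Energy

section WeightedEnergy

variable {ω : ℝ → ℝ} {β p : ℝ} {D : ℂ → ℝ}

theorem lintegral_Ioo_one_sub (F : ℝ → ENNReal) :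
    ∫⁻ s in Ioo (0 : ℝ) 1, F (1 - s) = ∫⁻ r in Ioo (0 : ℝ) 1, F r := by
  have := (volume.measurePreserving_sub_left (1 : ℝ)).setLIntegral_comp_preimage_emb
    (MeasurableEquiv.subLeft (1 : ℝ)).measurableEmbedding F (Ioo 0 1)
  rwa [preimage_const_sub_Ioo, sub_self, sub_zero] at this

theorem lintegral_symm_add {α γ : Type*} [MeasurableSpace α] [MeasurableSpace γ] {μ : Measure α}
    {ν : Measure γ} [SFinite μ] [SFinite ν] {H : γ → α → α → ENNReal}
    (hH : Measurable fun q : γ × α × α => H q.1 q.2.1 q.2.2) :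
    ∫⁻ s, ∫⁻ x, ∫⁻ y, H s x y + H s y x ∂μ ∂μ ∂ν = 2 * ∫⁻ x, ∫⁻ s, ∫⁻ y, H s x y ∂μ ∂ν ∂μ := by
  have slice_measurable (s : γ) : Measurable fun q : α × α => H s q.1 q.2 :=
    hH.comp (measurable_const.prodMk measurable_id)
  have symmetrize (s : γ) :
      ∫⁻ x, ∫⁻ y, H s x y + H s y x ∂μ ∂μ = 2 * ∫⁻ x, ∫⁻ y, H s x y ∂μ ∂μ := by
    have split (x : α) : ∫⁻ y, H s x y + H s y x ∂μ = ∫⁻ y, H s x y ∂μ + ∫⁻ y, H s y x ∂μ :=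
      lintegral_add_left ((slice_measurable s).comp (measurable_const.prodMk measurable_id)) _
    rw [lintegral_congr split, lintegral_add_left (slice_measurable s).lintegral_prod_right',
      two_mul]
    congr 1
    exact lintegral_lintegral_swap ((slice_measurable s).comp measurable_swap).aemeasurable
  rw [lintegral_congr symmetrize, lintegral_const_mul' _ _ ENNReal.ofNat_ne_top]
  congr 1
  have : Measurable fun q : (γ × α) × α => H q.1.1 q.1.2 q.2 :=
    hH.comp MeasurableEquiv.prodAssoc.measurable
  exact lintegral_lintegral_swap this.lintegral_prod_right'.aemeasurable

/-- The kernel whose symmetrization in `θ`, `θ'` dominates the squared derivative of the outer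
function with boundary modulus `ω ∘ D`, weighted by the logarithm of the distance `s` to the
circle. -/
noncomputable def energyKernel (ω : ℝ → ℝ) (D : ℂ → ℝ) (p s θ θ' : ℝ) : ENNReal :=
  ENNReal.ofReal (deriv ω (D (cpt θ)) ^ 2 * D (cpt θ) ^ p *
    radialKernel p (D (cpt θ)) s ‖cpt θ - cpt θ'‖)

theorem measurable_energyKernel (ω : ℝ → ℝ) (hD : Measurable D) (p : ℝ) :
    Measurable fun q : ℝ × ℝ × ℝ => energyKernel ω D p q.1 q.2.1 q.2.2 := by
  have := measurable_deriv ω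
  unfold energyKernel radialKernel
  fun_prop

theorem mul_incrKernel_eq_mul_radialKernel (ω : ℝ → ℝ) (p : ℝ) {d s x : ℝ} (hd : 0 ≤ d)
    (hs : 0 ≤ s) (hx : 0 ≤ x) :
    (1 - log s) * s ^ (-(1 / 2) : ℝ) * ((s + x) ^ (-(1 / 2) : ℝ) * incrKernel ω p d (s + x)) =
      deriv ω d ^ 2 * d ^ p * radialKernel p d s x := by
  rw [incrKernel, radialKernel, div_rpow hd (by positivity), rpow_neg (by positivity) p]
  ring

theorem exists_ofReal_mul_enorm_deriv_herglotzExp_log_sq_le (h : PowerConcaveWeight ω β π)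
    (hβ : β ∈ Ioo 0 1) (hp : p < 2 - 2 * β) (hD : IsCircleGauge D)
    (hu : CircleIntegrable (fun ζ => log (ω (D ζ))) 0 1) :
    ∃ C : ℝ, 0 ≤ C ∧ ∀ s ∈ Ioo (0 : ℝ) 1, ∀ θ, 0 < D (cpt θ) →
      ENNReal.ofReal (1 - log s) *
          ‖deriv (herglotzExp fun ζ => log (ω (D ζ))) (((1 - s : ℝ) : ℂ) * cpt θ)‖ₑ ^ 2 ≤
        ENNReal.ofReal C * ∫⁻ θ' in Ioc 0 (2 * π),
          (energyKernel ω D p s θ θ' + energyKernel ω D p s θ' θ) := by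
  obtain ⟨C, hC, deriv_sq_le⟩ := exists_enorm_deriv_herglotzExp_log_sq_le h hβ hp hD hu
  refine ⟨C, hC, fun s hs θ hθ => ?_⟩
  have hs0 : 0 < s := hs.1
  have weight_nonneg : 0 ≤ (1 - log s) * s ^ (-(1 / 2) : ℝ) :=
    mul_nonneg (by linarith [log_nonpos hs.1.le hs.2.le]) (by positivity)
  refine (mul_le_mul_right (deriv_sq_le s hs θ hθ) _).trans ?_
  rw [← mul_assoc, ← ENNReal.ofReal_mul (by linarith [log_nonpos hs.1.le hs.2.le]),
    mul_left_comm, ENNReal.ofReal_mul hC, mul_assoc,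
    ← lintegral_const_mul' _ _ ENNReal.ofReal_ne_top]
  refine mul_le_mul_right (lintegral_mono_ae ?_) _
  filter_upwards [hD.ae_pos] with θ' hθ'
  have kernel_nonneg {d : ℝ} (hd : 0 < d) : 0 ≤ deriv ω d ^ 2 * d ^ p *
      radialKernel p d s ‖cpt θ - cpt θ'‖ := by
    rw [← mul_incrKernel_eq_mul_radialKernel ω p hd.le hs0.le (norm_nonneg _)]
    exact mul_nonneg weight_nonneg
      (mul_nonneg (by positivity) (incrKernel_nonneg ω p hd.le (by positivity)))
  rw [energyKernel, energyKernel, norm_sub_rev (cpt θ') (cpt θ),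
    ← ENNReal.ofReal_mul weight_nonneg,
    ← ENNReal.ofReal_add (kernel_nonneg hθ) (kernel_nonneg hθ'), mul_add, mul_add,
    mul_incrKernel_eq_mul_radialKernel ω p hθ.le hs0.le (norm_nonneg _),
    mul_incrKernel_eq_mul_radialKernel ω p hθ'.le hs0.le (norm_nonneg _)]

theorem lintegral_energyKernel_le (ω : ℝ → ℝ) (hp : 1 < p) (hD : IsCircleGauge D) {θ : ℝ}
    (hθ : 0 < D (cpt θ)) :
    ∫⁻ s in Ioo (0 : ℝ) 1, ∫⁻ θ' in Ioc 0 (2 * π), energyKernel ω D p s θ θ' ≤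
      ENNReal.ofReal (36 * (8 + 2 / (p - 1)) ^ 2) * ENNReal.ofReal
        (D (cpt θ) * deriv ω (D (cpt θ)) ^ 2 * (2 - log (D (cpt θ)))) := by
  have weight_nonneg : 0 ≤ deriv ω (D (cpt θ)) ^ 2 * D (cpt θ) ^ p := by positivity
  have combine_powers : D (cpt θ) ^ p * D (cpt θ) ^ (1 - p) = D (cpt θ) := by
    rw [← rpow_add hθ, add_sub_cancel, rpow_one]
  simp only [energyKernel, ENNReal.ofReal_mul weight_nonneg,
    lintegral_const_mul' _ _ ENNReal.ofReal_ne_top]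
  refine (mul_le_mul_right (lintegral_radialKernel_chord_le hp hθ (hD.le_two θ) θ) _).trans_eq ?_
  rw [← ENNReal.ofReal_mul weight_nonneg, ← ENNReal.ofReal_mul (by positivity)]
  congr 1
  linear_combination 36 * (8 + 2 / (p - 1)) ^ 2 * deriv ω (D (cpt θ)) ^ 2 *
    (2 - log (D (cpt θ))) * combine_powers

theorem exists_lintegral_log_mul_deriv_herglotzExp_log_sq_le (h : PowerConcaveWeight ω β π)
    (hβ : β ∈ Ioo 0 (1 / 2)) (hD : IsCircleGauge D)
    (hu : CircleIntegrable (fun ζ => log (ω (D ζ))) 0 1) :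
    ∃ C : ℝ, ∫⁻ z in unitDisc, ENNReal.ofReal (1 - log (1 - ‖z‖)) *
        ‖deriv (herglotzExp fun ζ => log (ω (D ζ))) z‖ₑ ^ 2 ≤
      ENNReal.ofReal C * ∫⁻ θ in Ioc 0 (2 * π), ENNReal.ofReal
        (D (cpt θ) * deriv ω (D (cpt θ)) ^ 2 * (2 - log (D (cpt θ)))) := by
  obtain ⟨p, hp1, hp⟩ : ∃ p, 1 < p ∧ p < 2 - 2 * β := exists_between (by linarith [hβ.2])
  have hβ1 : β ∈ Ioo 0 1 := ⟨hβ.1, by linarith [hβ.2]⟩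
  obtain ⟨C, hC, deriv_sq_le⟩ := exists_ofReal_mul_enorm_deriv_herglotzExp_log_sq_le h hβ1 hp hD hu
  set K := 36 * (8 + 2 / (p - 1)) ^ 2
  set f := herglotzExp fun ζ => log (ω (D ζ))
  have := measurable_deriv f
  refine ⟨C * (2 * K), ?_⟩
  rw [lintegral_unitDisc_polar (by fun_prop), ← lintegral_Ioo_one_sub]
  calc _ ≤ ∫⁻ s in Ioo (0 : ℝ) 1, ∫⁻ θ in Ioc 0 (2 * π), ENNReal.ofReal C *
          ∫⁻ θ' in Ioc 0 (2 * π), (energyKernel ω D p s θ θ' + energyKernel ω D p s θ' θ) := by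
        refine setLIntegral_mono' measurableSet_Ioo fun s hs => ?_
        refine (mul_le_of_le_one_left' (ENNReal.ofReal_le_one.2 (by linarith [hs.1]))).trans
          (lintegral_mono_ae ?_)
        filter_upwards [hD.ae_pos] with θ hθ
        rw [norm_ofReal_mul_cpt (by linarith [hs.2]), sub_sub_cancel]
        exact deriv_sq_le s hs θ hθ
    _ = ENNReal.ofReal C * (2 * ∫⁻ θ in Ioc 0 (2 * π), ∫⁻ s in Ioo (0 : ℝ) 1,
          ∫⁻ θ' in Ioc 0 (2 * π), energyKernel ω D p s θ θ') := by
        simp only [lintegral_const_mul' _ _ (ENNReal.ofReal_ne_top (r := C))]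
        rw [lintegral_symm_add
          (measurable_energyKernel ω hD.lipschitz.continuous.measurable p)]
    _ ≤ ENNReal.ofReal C * (2 * ∫⁻ θ in Ioc 0 (2 * π), ENNReal.ofReal K * ENNReal.ofReal
          (D (cpt θ) * deriv ω (D (cpt θ)) ^ 2 * (2 - log (D (cpt θ))))) := by
        gcongr ENNReal.ofReal C * (2 * ?_)
        refine lintegral_mono_ae ?_
        filter_upwards [hD.ae_pos] with θ hθ
        exact lintegral_energyKernel_le ω hp1 hD hθ
    _ = _ := by
        rw [lintegral_const_mul' _ _ ENNReal.ofReal_ne_top, ENNReal.ofReal_mul hC,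
          ENNReal.ofReal_mul zero_le_two, ENNReal.ofReal_ofNat, mul_assoc, mul_assoc]

end WeightedEnergy

section Multipliers

theorem integrableOn_norm_sq_iff {E : Type*} [NormedAddCommGroup E] {α : Type*}
    [MeasurableSpace α] {μ : Measure α} {f : α → E} {s : Set α}
    (hf : AEStronglyMeasurable f (μ.restrict s)) :
    IntegrableOn (fun x => ‖f x‖ ^ 2) s μ ↔ ∫⁻ x in s, ‖f x‖ₑ ^ 2 ∂μ ≠ ⊤ := by
  have : AEStronglyMeasurable (fun x => ‖f x‖ ^ 2) (μ.restrict s) := hf.norm.pow 2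
  rw [IntegrableOn, Integrable, and_iff_right this, HasFiniteIntegral, lt_top_iff_ne_top]
  simp only [enorm_pow, enorm_norm]

theorem one_sub_log_nonneg {w : ℂ} (hw : w ∈ unitDisc) : 0 ≤ 1 - log (1 - ‖w‖) := by
  have : log (1 - ‖w‖) ≤ 0 :=
    log_nonpos (sub_nonneg.2 (mem_unitDisc.1 hw).le) (sub_le_self _ (norm_nonneg w))
  linarith

theorem integral_norm_mul_sq_le {f g : ℂ → ℂ} (hf : ContinuousOn f unitDisc)
    (hg : ContinuousOn g unitDisc) {K r : ℝ} (hK : ∀ z ∈ unitDisc, ‖f z‖ ≤ K)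
    (hr : r ∈ Ioo 0 1) :
    ∫ θ in Ioc 0 (2 * π), ‖f (r * cpt θ) * g (r * cpt θ)‖ ^ 2 ≤
      K ^ 2 * ∫ θ in Ioc 0 (2 * π), ‖g (r * cpt θ)‖ ^ 2 := by
  have mem_disc (θ : ℝ) : (r : ℂ) * cpt θ ∈ unitDisc :=
    ofReal_mul_cpt_mem_unitDisc hr.1.le hr.2 θ
  have := continuous_cpt
  have continuous_comp {k : ℂ → ℂ} (hk : ContinuousOn k unitDisc) :
      Continuous fun θ => k ((r : ℂ) * cpt θ) := hk.comp_continuous (by fun_prop) mem_disc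
  have hgr := continuous_comp hg
  have hfr := continuous_comp hf
  have integrable {k : ℝ → ℝ} (hk : Continuous k) : IntegrableOn k (Ioc 0 (2 * π)) :=
    hk.integrableOn_Ioc
  rw [← integral_const_mul]
  refine integral_mono (integrable ((hfr.mul hgr).norm.pow 2))
    (integrable (continuous_const.mul (hgr.norm.pow 2))) fun θ => ?_
  rw [norm_mul, mul_pow]
  gcongr
  exact hK _ (mem_disc θ)

theorem enorm_deriv_mul_sq_le {f g : ℂ → ℂ} {z : ℂ} {K C L : ℝ} (hf : DifferentiableAt ℂ f z)
    (hg : DifferentiableAt ℂ g z) (hfz : ‖f z‖ ≤ K) (hgz : ‖g z‖ ^ 2 ≤ C * L) (hC : 0 ≤ C)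
    (hL : 0 ≤ L) :
    ‖deriv (fun z => f z * g z) z‖ₑ ^ 2 ≤
      ENNReal.ofReal (2 * C) * (ENNReal.ofReal L * ‖deriv f z‖ₑ ^ 2) +
        ENNReal.ofReal (2 * K ^ 2) * ‖deriv g z‖ₑ ^ 2 := by
  simp only [← ofReal_norm, ← ENNReal.ofReal_pow (norm_nonneg _)]
  rw [← ENNReal.ofReal_mul hL, ← ENNReal.ofReal_mul (by positivity),
    ← ENNReal.ofReal_mul (by positivity), ← ENNReal.ofReal_add (by positivity) (by positivity)]
  refine ENNReal.ofReal_le_ofReal ?_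
  calc ‖deriv (fun z => f z * g z) z‖ ^ 2 ≤ (‖deriv f z‖ * ‖g z‖ + ‖f z‖ * ‖deriv g z‖) ^ 2 := by
        rw [deriv_fun_mul hf hg, ← norm_mul, ← norm_mul]
        gcongr
        exact norm_add_le _ _
    _ ≤ 2 * ((‖deriv f z‖ * ‖g z‖) ^ 2 + (‖f z‖ * ‖deriv g z‖) ^ 2) := add_sq_le
    _ = 2 * (‖g z‖ ^ 2 * ‖deriv f z‖ ^ 2) + 2 * (‖f z‖ ^ 2 * ‖deriv g z‖ ^ 2) := by ring
    _ ≤ 2 * (C * L * ‖deriv f z‖ ^ 2) + 2 * (K ^ 2 * ‖deriv g z‖ ^ 2) := by gcongr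
    _ = _ := by ring

theorem isMultiplierD_of_norm_le_of_lintegral_ne_top {f : ℂ → ℂ}
    (hf : DifferentiableOn ℂ f unitDisc) {K : ℝ} (hK : ∀ z ∈ unitDisc, ‖f z‖ ≤ K)
    (hfi : ∫⁻ z in unitDisc, ENNReal.ofReal (1 - log (1 - ‖z‖)) * ‖deriv f z‖ₑ ^ 2 ≠ ⊤) :
    IsMultiplierD f := by
  rintro g ⟨hg, ⟨M, hM⟩, hgi⟩
  have isOpen_unitDisc : IsOpen unitDisc := Metric.isOpen_ball
  have measurable_deriv_f := measurable_deriv f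
  rw [integrableOn_norm_sq_iff (measurable_deriv g).aestronglyMeasurable] at hgi
  obtain ⟨C, hC, hgC⟩ := exists_norm_sq_le_log hg hgi
  refine ⟨hf.mul hg, ⟨K ^ 2 * M, fun r hr => ?_⟩, ?_⟩
  · exact (integral_norm_mul_sq_le hf.continuousOn hg.continuousOn hK hr).trans
      (mul_le_mul_of_nonneg_left (hM r hr) (sq_nonneg K))
  · rw [integrableOn_norm_sq_iff (measurable_deriv _).aestronglyMeasurable]
    refine ne_top_of_le_ne_top ?_ (setLIntegral_mono' isOpen_unitDisc.measurableSet fun z hz =>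
      enorm_deriv_mul_sq_le (hf.differentiableAt (isOpen_unitDisc.mem_nhds hz))
        (hg.differentiableAt (isOpen_unitDisc.mem_nhds hz)) (hK z hz) (hgC z hz) hC
        (one_sub_log_nonneg hz))
    rw [lintegral_add_left (by fun_prop), lintegral_const_mul' _ _ ENNReal.ofReal_ne_top,
      lintegral_const_mul' _ _ ENNReal.ofReal_ne_top]
    exact ENNReal.add_ne_top.2 ⟨ENNReal.mul_ne_top ENNReal.ofReal_ne_top hfi,
      ENNReal.mul_ne_top ENNReal.ofReal_ne_top hgi⟩

variable {ω : ℝ → ℝ} {β : ℝ} {D : ℂ → ℝ}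

theorem PowerConcaveWeight.mul_deriv_sq_mul_two_sub_log_le (h : PowerConcaveWeight ω β π)
    (hβ : 0 < β) {d : ℝ} (hd : 0 < d) (hd2 : d ≤ 2) :
    d * deriv ω d ^ 2 * (2 - log d) ≤
      4 * |d * deriv ω d ^ 2 * log (1 / d)| + 6 * (β * ω 2) ^ 2 := by
  have weight_nonneg : 0 ≤ d * deriv ω d ^ 2 := by positivity
  rcases le_total d (1 / 2) with hle | hle
  · have log_le : log d ≤ -log 2 := by
      rw [← log_inv, ← one_div]
      exact log_le_log hd hle
    have := log_two_gt_d9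
    have : 0 ≤ (β * ω 2) ^ 2 := sq_nonneg _
    rw [one_div, log_inv, abs_of_nonneg (mul_nonneg weight_nonneg (by linarith))]
    nlinarith
  · have hd_mem : d ∈ Ioo 0 π := ⟨hd, by linarith [pi_gt_three]⟩
    have deriv_le : d * deriv ω d ≤ β * ω 2 := (h.mul_deriv_le hβ hd_mem).trans <|
      mul_le_mul_of_nonneg_left
        (h.mono hd_mem ⟨zero_lt_two, by linarith [pi_gt_three]⟩ hd2) hβ.le
    have density_le : d * deriv ω d ^ 2 ≤ 2 * (β * ω 2) ^ 2 := by
      have := pow_le_pow_left₀ (mul_nonneg hd.le (h.deriv_nonneg hd_mem)) deriv_le 2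
      nlinarith
    have log_ge : -1 ≤ log d := by
      have := log_le_log (by norm_num) hle
      rw [one_div, log_inv] at this
      linarith [log_two_lt_d9]
    calc d * deriv ω d ^ 2 * (2 - log d) ≤ d * deriv ω d ^ 2 * 3 := by gcongr; linarith
      _ ≤ 2 * (β * ω 2) ^ 2 * 3 := by gcongr
      _ ≤ _ := by linarith [abs_nonneg (d * deriv ω d ^ 2 * log (1 / d))]

theorem exists_norm_herglotzExp_log_le (h : PowerConcaveWeight ω β π) (hβ : β ∈ Ioo 0 1)
    (hD : IsCircleGauge D) (hD0 : ∀ θ, 0 ≤ D (cpt θ))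
    (hu : CircleIntegrable (fun ζ => log (ω (D ζ))) 0 1) :
    ∃ K, ∀ z ∈ unitDisc, ‖herglotzExp (fun ζ => log (ω (D ζ))) z‖ ≤ K := by
  set f := herglotzExp fun ζ => log (ω (D ζ))
  refine ⟨max (exp 72 * ω 3) ‖f 0‖, fun z hz => ?_⟩
  rcases eq_or_ne z 0 with rfl | hz0
  · exact le_max_right _ _
  have hs : 1 - ‖z‖ ∈ Ioo 0 1 :=
    ⟨sub_pos.2 (mem_unitDisc.1 hz), sub_lt_self _ (norm_pos_iff.2 hz0)⟩
  have polar : ((1 - (1 - ‖z‖) : ℝ) : ℂ) * cpt z.arg = z := by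
    rw [sub_sub_cancel, cpt, Complex.norm_mul_exp_arg_mul_I]
  have norm_le := norm_herglotzExp_log_le h hβ hD hu hs (hD0 z.arg)
  rw [polar] at norm_le
  refine le_max_of_le_left (norm_le.trans ?_)
  gcongr
  have := hD.le_two z.arg
  exact h.mono ⟨add_pos_of_nonneg_of_pos (hD0 z.arg) hs.1, hD.add_lt_pi hs.2 z.arg⟩
    ⟨three_pos, pi_gt_three⟩ (by linarith [hs.2])

theorem isMultiplierD_herglotzExp_log (h : PowerConcaveWeight ω β π) (hβ : β ∈ Ioo 0 (1 / 2))
    (hD : IsCircleGauge D) (hD0 : ∀ θ, 0 ≤ D (cpt θ))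
    (hu : CircleIntegrable (fun ζ => log (ω (D ζ))) 0 1)
    (hi : IntegrableOn (fun θ => D (cpt θ) * deriv ω (D (cpt θ)) ^ 2 * log (1 / D (cpt θ)))
      (Ioc 0 (2 * π))) :
    IsMultiplierD (herglotzExp fun ζ => log (ω (D ζ))) := by
  obtain ⟨K, hK⟩ := exists_norm_herglotzExp_log_le h ⟨hβ.1, by linarith [hβ.2]⟩ hD hD0 hu
  obtain ⟨C, hC⟩ := exists_lintegral_log_mul_deriv_herglotzExp_log_sq_le h hβ hD hu
  refine isMultiplierD_of_norm_le_of_lintegral_ne_top (differentiableOn_herglotzExp hu) hK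
    (ne_top_of_le_ne_top (ENNReal.mul_ne_top ENNReal.ofReal_ne_top ?_) hC)
  have majorant_integrable : Integrable (fun θ => 4 * |D (cpt θ) * deriv ω (D (cpt θ)) ^ 2 *
      log (1 / D (cpt θ))| + 6 * (β * ω 2) ^ 2) (volume.restrict (Ioc 0 (2 * π))) :=
    (hi.abs.const_mul 4).add (integrableOn_const measure_Ioc_lt_top.ne)
  refine ne_top_of_le_ne_top majorant_integrable.lintegral_lt_top.ne (lintegral_mono_ae ?_)
  filter_upwards [hD.ae_pos] with θ hθ
  exact ENNReal.ofReal_le_ofReal (h.mul_deriv_sq_mul_two_sub_log_le hβ.1 hθ (hD.le_two θ))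

theorem isMultiplierD_herglotzExp_const (c : ℝ) : IsMultiplierD (herglotzExp fun _ => c) := by
  have hu : CircleIntegrable (fun _ : ℂ => c) 0 1 := circleIntegrable_const c 0 1
  refine isMultiplierD_of_norm_le_of_lintegral_ne_top (K := exp c)
    (differentiableOn_herglotzExp hu) (fun z hz => ?_) ?_
  · simp only [norm_herglotzExp hu hz c, sub_self, mul_zero, circleAverage_const, add_zero, le_refl]
  · have deriv_eq_zero : ∀ z ∈ unitDisc, deriv (herglotzExp fun _ => c) z = 0 := fun z hz => by
      simp only [(hasDerivAt_herglotzExp hu hz c).deriv, sub_self, Complex.ofReal_zero, mul_zero,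
        circleAverage_const]
    have : ∫⁻ z in unitDisc, ENNReal.ofReal (1 - log (1 - ‖z‖)) *
        ‖deriv (herglotzExp fun _ => c) z‖ₑ ^ 2 = ∫⁻ _ in unitDisc, 0 :=
      setLIntegral_congr_fun Metric.isOpen_ball.measurableSet fun z hz => by
        simp only [deriv_eq_zero z hz, enorm_zero, ne_eq, two_ne_zero, not_false_eq_true,
          zero_pow, mul_zero]
    rw [this, lintegral_zero]
    exact ENNReal.zero_ne_top

end Multipliers

section OuterFunctions

variable {E : Set ℂ}

theorem isCircleGauge_dE (hEc : IsClosed E) (hEsub : E ⊆ circleT) (hEz : MeasureZeroOnCircle E)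
    (hne : E.Nonempty) : IsCircleGauge (dE E) where
  lipschitz := Metric.lipschitz_infDist_pt E
  le_two θ := by
    obtain ⟨e, he⟩ := hne
    have norm_e : ‖e‖ = 1 := mem_sphere_zero_iff_norm.1 (hEsub he)
    calc dE E (cpt θ) ≤ dist (cpt θ) e := Metric.infDist_le_dist_of_mem he
      _ ≤ ‖cpt θ‖ + ‖e‖ := dist_le_norm_add_norm _ _
      _ = 2 := by rw [norm_cpt, norm_e, one_add_one_eq_two]
  ae_pos := by
    rw [ae_restrict_iff' measurableSet_Ioc, ae_iff]
    refine measure_mono_null (fun θ hθ => ?_) hEz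
    obtain ⟨hθ_mem, hθ_pos⟩ := Classical.not_imp.1 hθ
    exact ⟨hθ_mem, not_not.1 fun hn => hθ_pos ((hEc.notMem_iff_infDist_pos hne).1 hn)⟩

theorem isMultiplierD_outerFun_empty (ω : ℝ → ℝ) : IsMultiplierD (outerFun ω ∅) := by
  rw [outerFun_eq_herglotzExp]
  simpa only [dE, Metric.infDist_empty] using isMultiplierD_herglotzExp_const (log (ω 0))

theorem isMultiplierD_outerFun (hEc : IsClosed E) (hEsub : E ⊆ circleT)
    (hEz : MeasureZeroOnCircle E) (hne : E.Nonempty) {ω : ℝ → ℝ} {β : ℝ}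
    (hω : PowerConcaveWeight ω β π)
    (hβ : β ∈ Ioo 0 (1 / 2)) (hlog : LogOmegaInt ω E)
    (hi : IntegrableOn (fun θ => dE E (cpt θ) * deriv ω (dE E (cpt θ)) ^ 2 *
      log (1 / dE E (cpt θ))) (Ioc 0 (2 * π))) :
    IsMultiplierD (outerFun ω E) := by
  rw [outerFun_eq_herglotzExp]
  exact isMultiplierD_herglotzExp_log hω hβ (isCircleGauge_dE hEc hEsub hEz hne)
    (fun _ => Metric.infDist_nonneg) (circleIntegrable_zero_one.2 hlog) hi

theorem abs_log_rpow_le {α d : ℝ} (hα : α ∈ Ioo 0 (1 / 2)) (hd : 0 < d) (hd2 : d ≤ 2) :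
    |log (d ^ α)| ≤ |d ^ (2 * α - 1) * log (1 / d)| := by
  have half_le : 1 / 2 ≤ d ^ (2 * α - 1) :=
    calc (1 / 2 : ℝ) = 2 ^ (-1 : ℝ) := by rw [rpow_neg_one, one_div]
      _ ≤ 2 ^ (2 * α - 1) := rpow_le_rpow_of_exponent_le one_le_two (by linarith [hα.1])
      _ ≤ d ^ (2 * α - 1) := rpow_le_rpow_of_nonpos hd hd2 (by linarith [hα.2])
  rw [log_rpow hd, abs_mul, abs_mul, one_div, log_inv, abs_neg, abs_of_pos hα.1,
    abs_of_nonneg (rpow_nonneg hd.le _)]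
  gcongr
  exact hα.2.le.trans half_le

theorem mul_deriv_rpow_sq {α d : ℝ} (hα : α ≠ 1 / 2) (hd : 0 < d) :
    d * deriv (fun t => t ^ α) d ^ 2 = α ^ 2 * d ^ (2 * α - 1) := by
  rw [Real.deriv_rpow_const, mul_pow, ← rpow_mul_natCast hd.le, mul_left_comm,
    ← rpow_one_add' hd.le fun heq => hα (by push_cast at heq; linarith)]
  push_cast
  ring_nf

theorem isMultiplierD_outerFun_rpow (hEc : IsClosed E) (hEsub : E ⊆ circleT)
    (hEz : MeasureZeroOnCircle E) {α : ℝ} (hα : α ∈ Ioo 0 (1 / 2))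
    (hi : IntegrableOn (fun θ => dE E (cpt θ) ^ (2 * α - 1) * log (1 / dE E (cpt θ)))
      (Ioc 0 (2 * π))) :
    IsMultiplierD (outerFun (fun t => t ^ α) E) := by
  rcases E.eq_empty_or_nonempty with rfl | hne
  · exact isMultiplierD_outerFun_empty _
  have hD := isCircleGauge_dE hEc hEsub hEz hne
  have hDm : Measurable (dE E) := hD.lipschitz.continuous.measurable
  refine isMultiplierD_outerFun hEc hEsub hEz hne (powerConcaveWeight_rpow hα.1 π) hα ?_ ?_
  · refine Integrable.mono hi (measurable_log.comp
      ((hDm.comp measurable_cpt).pow_const α)).aestronglyMeasurable ?_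
    filter_upwards [hD.ae_pos] with θ hθ
    exact abs_log_rpow_le hα hθ (hD.le_two θ)
  · refine (Integrable.const_mul hi (α ^ 2)).congr ?_
    filter_upwards [hD.ae_pos] with θ hθ
    rw [mul_deriv_rpow_sq hα.2.ne hθ, mul_assoc]

end OuterFunctions

theorem statement15_general (E : Set ℂ) (hEc : IsClosed E) (hEsub : E ⊆ circleT)
    (hEz : MeasureZeroOnCircle E) (ω ω' : ℝ → ℝ) (β : ℝ) (hβ : β ∈ Ioo 0 (1 / 2))
    (hω : PowerConcaveWeight ω β π) (hω' : ∀ t ∈ Ioo 0 π, HasDerivAt ω (ω' t) t)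
    (hlog : LogOmegaInt ω E) :
    (∀ α ∈ Ioo (0 : ℝ) (1 / 2),
      IntegrableOn (fun θ => dE E (cpt θ) ^ (2 * α - 1) * log (1 / dE E (cpt θ)))
        (Ioc 0 (2 * π)) →
      IsMultiplierD (outerFun (fun t => t ^ α) E)) ∧
    (IntegrableOn (fun θ => dE E (cpt θ) * ω' (dE E (cpt θ)) ^ 2 * log (1 / dE E (cpt θ)))
        (Ioc 0 (2 * π)) →
      IsMultiplierD (outerFun ω E)) := by
  refine ⟨fun α hα hi => isMultiplierD_outerFun_rpow hEc hEsub hEz hα hi, fun hi => ?_⟩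
  rcases E.eq_empty_or_nonempty with rfl | hne
  · exact isMultiplierD_outerFun_empty ω
  have hD := isCircleGauge_dE hEc hEsub hEz hne
  refine isMultiplierD_outerFun hEc hEsub hEz hne hω hβ hlog (hi.congr ?_)
  filter_upwards [hD.ae_pos] with θ hθ
  rw [(hω' _ (hD.mem_Ioo hθ)).deriv]

/-- Sufficient integral conditions for `f_{α,E}` (when `E ∈ 𝓛₁`) and `f_{ω,E}`
(when `E ∈ 𝓛₂`) to be multipliers of `𝒟`. -/
theorem statement15 (E : Set ℂ) (hEc : IsClosed E) (hEsub : E ⊆ circleT)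
    (hEz : MeasureZeroOnCircle E)
    (ω ω' : ℝ → ℝ) (γ : ℝ) (hγ : 2 < γ) (hω : OmegaHyp ω ω' γ)
    (hlog : LogOmegaInt ω E) :
    (∀ α : ℝ, α ∈ Set.Ioo (0:ℝ) (1/2) → L1Set E →
      IntegrableOn (fun θ => dE E (cpt θ) ^ (2 * α - 1) * Real.log (1 / dE E (cpt θ)))
        (Set.Ioc 0 (2 * π)) volume →
      IsMultiplierD (outerFun (fun t => t ^ α) E)) ∧
    (L2Set E →
      IntegrableOn (fun θ => dE E (cpt θ) * (ω' (dE E (cpt θ))) ^ 2 *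
          Real.log (1 / dE E (cpt θ))) (Set.Ioc 0 (2 * π)) volume →
      IsMultiplierD (outerFun ω E)) := by
  have hβ : γ⁻¹ ∈ Ioo 0 (1 / 2) :=
    ⟨inv_pos.2 (by linarith), by rw [one_div]; exact inv_strictAnti₀ two_pos hγ⟩
  exact (statement15_general E hEc hEsub hEz ω ω' γ⁻¹ hβ hω.powerConcaveWeight hω.2.2.2.1
    hlog).imp (fun h α hα _ => h α hα) (fun h _ => h)
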